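/- Let n and n^l both lie in ℤ₊^{m₁+1}(•) × ℤ₊^{m₂+1}(•) with n_{1,m₁} ≥ 1, let A,B ∈ ℝ with |A| + |B| > 0, and define G_{n,0} = A·A_{n,0} + B·A_{n^l,0} and recursively G_{n,−j−1}(z) = ∫ G_{n,−j}(x) dσ²_j(x)/(z−x) for j = 0,…,m₂ (equivalently G_{n,−j} = A·A_{n,−j} + B·A_{n^l,−j}). Then for every j ∈ {1,…,m₂}, G_{n,−j} has at most N_{2,j} + 1 zeros in ℂ∖Δ²_{j−1}, counting multiplicities, and it changes sign at at least N_{2,j} points in the interior of Δ²_j; hence all zeros of G_{n,−j} in ℂ∖Δ²_{j−1} are real and simple. Here N_{2,j} = n_{2,j} + … + n_{2,m₂}. -/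

import Mathlib

open MeasureTheory Polynomial Set Filter

noncomputable section

/-- The support of a Borel measure on `ℝ`: points all of whose open neighborhoods
have positive measure. -/
def msupport (μ : Measure ℝ) : Set ℝ :=
  {x : ℝ | ∀ U : Set ℝ, IsOpen U → x ∈ U → μ U ≠ 0}

/-- The copy of a real set inside `ℂ`. -/
def cpx (s : Set ℝ) : Set ℂ := (fun x : ℝ => (x : ℂ)) '' s

/-- `nikhat μ e j g` is the Cauchy transform of the measure `⟨σ_j, …, σ_{j+g}⟩`,
where `σ_i = (e i) • (μ i)` is a measure of constant sign. -/
def nikhat (μ : ℕ → Measure ℝ) (e : ℕ → ℝ) : ℕ → ℕ → ℂ → ℂ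
  | j, 0, z => (e j : ℂ) * ∫ t, 1 / (z - (t : ℂ)) ∂(μ j)
  | j, g + 1, z => (e j : ℂ) * ∫ t, nikhat μ e (j + 1) g (t : ℂ) / (z - (t : ℂ)) ∂(μ j)

/-- The Cauchy transform `ŝ_{j+1,k}` of `s_{j+1,k} = ⟨σ_{j+1},…,σ_k⟩`, with the
convention that it is `≡ 1` when `k ≤ j`. -/
def wt (μ : ℕ → Measure ℝ) (e : ℕ → ℝ) (j k : ℕ) (z : ℂ) : ℂ :=
  if j < k then nikhat μ e (j + 1) (k - (j + 1)) z else 1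

/-- Integral of `f` against the measure `s_{j,k} = ⟨σ_j, …, σ_k⟩`
(whose density with respect to `σ_j` is `ŝ_{j+1,k}`). -/
def sInt (μ : ℕ → Measure ℝ) (e : ℕ → ℝ) (j k : ℕ) (f : ℝ → ℂ) : ℂ :=
  (e j : ℂ) * ∫ x, f x * wt μ e j k (x : ℂ) ∂(μ j)

/-- The linear form `𝒜_{n,j}(z) = ∑_{k=j}^{m₁} a_k(z) ŝ¹_{j+1,k}(z)`. -/
def linForm (μ : ℕ → Measure ℝ) (e : ℕ → ℝ) (m₁ j : ℕ) (A : ℕ → Polynomial ℝ)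
    (z : ℂ) : ℂ :=
  ∑ k ∈ Finset.Icc j m₁, Polynomial.aeval z (A k) * wt μ e j k z

/-- The linear forms with negative index:
`𝒜_{n,-j-1}(z) = ∫ 𝒜_{n,-j}(x) dσ²_j(x) / (z - x)`. -/
def linFormNeg (μ : ℕ → Measure ℝ) (e : ℕ → ℝ) (F : ℂ → ℂ) : ℕ → ℂ → ℂ
  | 0 => F
  | j + 1 => fun z => (e j : ℂ) * ∫ x, linFormNeg μ e F j (x : ℂ) / (z - (x : ℂ)) ∂(μ j)

/-- A Nikishin system `N(σ_0,…,σ_m)` of measures of constant sign `σ_j = (e j) • (μ j)`,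
with `Co(supp σ_j) = Δ_j = [a j, b j]` and `Δ_j ∩ Δ_{j+1} = ∅`. -/
structure NikSys (m : ℕ) where
  μ : ℕ → Measure ℝ
  e : ℕ → ℝ
  a : ℕ → ℝ
  b : ℕ → ℝ
  fin : ∀ j, IsFiniteMeasure (μ j)
  sgn : ∀ j, e j = 1 ∨ e j = -1
  hull : ∀ j ≤ m, convexHull ℝ (msupport (μ j)) = Set.Icc (a j) (b j)
  inf : ∀ j ≤ m, (msupport (μ j)).Infinite
  disj : ∀ j < m, Set.Icc (a j) (b j) ∩ Set.Icc (a (j + 1)) (b (j + 1)) = ∅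

/-- Decreasing multi-index (the class `ℤ₊^{m+1}(•)`). -/
def Decr (m : ℕ) (n : ℕ → ℕ) : Prop := ∀ j < m, n (j + 1) ≤ n j

/-- `|n| = n_0 + ⋯ + n_m`. -/
def msum (m : ℕ) (n : ℕ → ℕ) : ℕ := ∑ j ∈ Finset.range (m + 1), n j

/-- `N_{1,j} = n_j + ⋯ + n_m` (partial tail sums). -/
def tailSum (m : ℕ) (n : ℕ → ℕ) (j : ℕ) : ℕ := ∑ k ∈ Finset.Icc j m, n k

/-- Mixed type multiple orthogonal polynomials relative to `(n1;n2)` and `(S1,S2)`. -/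
def IsMOP (m₁ m₂ : ℕ) (S1 : NikSys m₁) (S2 : NikSys m₂)
    (n1 n2 : ℕ → ℕ) (A : ℕ → Polynomial ℝ) : Prop :=
  (∀ j ≤ m₁, (A j).degree < (n1 j : WithBot ℕ)) ∧
  (∃ j ≤ m₁, A j ≠ 0) ∧
  ∀ k ≤ m₂, ∀ ν < n2 k,
    sInt S2.μ S2.e 0 k (fun x => (x : ℂ) ^ ν * linForm S1.μ S1.e m₁ 0 A (x : ℂ)) = 0

/-- The "monic" normalization: the last entry different from zero has leading
coefficient `1`. -/
def MonicLast (m₁ : ℕ) (A : ℕ → Polynomial ℝ) : Prop :=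
  ∃ j ≤ m₁, (A j).Monic ∧ ∀ k, j < k → k ≤ m₁ → A k = 0

/-- `n^l`: increase the `l`-th component by one. -/
def bump (l : ℕ) (n : ℕ → ℕ) : ℕ → ℕ := fun j => if j = l then n j + 1 else n j


/-- `f` has at most `N` zeros, counting multiplicities, on `D ⊆ ℂ`
(multiplicities measured through vanishing of iterated derivatives). -/
def CZerosLE (f : ℂ → ℂ) (D : Set ℂ) (N : ℕ) : Prop :=
  ∀ (S : Finset ℂ) (ord : ℂ → ℕ), ↑S ⊆ D →
    (∀ x ∈ S, ∀ i < ord x, iteratedDeriv i f x = 0) → ∑ x ∈ S, ord x ≤ N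

/-- `f` has fewer than `N` zeros, counting multiplicities, on `D ⊆ ℂ`. -/
def CZerosLT (f : ℂ → ℂ) (D : Set ℂ) (N : ℕ) : Prop :=
  ∀ (S : Finset ℂ) (ord : ℂ → ℕ), ↑S ⊆ D →
    (∀ x ∈ S, ∀ i < ord x, iteratedDeriv i f x = 0) → ∑ x ∈ S, ord x < N

/-- A real function changes sign at `x₀`: every neighborhood of `x₀` contains points
`u, v` with `f u * f v < 0`. -/
def SignChangeAt (f : ℝ → ℝ) (x₀ : ℝ) : Prop :=
  ∀ δ > 0, ∃ u v : ℝ, |u - x₀| < δ ∧ |v - x₀| < δ ∧ f u * f v < 0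


lemma msupport_compl_null (μ : Measure ℝ) : μ (msupport μ)ᶜ = 0 := by
  have : msupport μ = μ.support := by
    rw [Measure.support_eq_forall_isOpen]
    ext x
    simp only [msupport, Set.mem_ofPred_eq, pos_iff_ne_zero]
    constructor
    · intro h U hx hU
      exact h U hU hx
    · intro h U hU hx
      exact h U hx hU
  rw [this]
  exact Measure.measure_compl_support

lemma null_Icc {μ : Measure ℝ} {a b : ℝ} (h : convexHull ℝ (msupport μ) = Set.Icc a b) :
    μ (Set.Icc a b)ᶜ = 0 := by
  refine measure_mono_null ?_ (msupport_compl_null μ)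
  apply Set.compl_subset_compl.mpr
  rw [← h]
  exact subset_convexHull ℝ _

lemma lt_of_hull {μ : Measure ℝ} {a b : ℝ} (h : convexHull ℝ (msupport μ) = Set.Icc a b)
    (hi : (msupport μ).Infinite) : a < b := by
  by_contra hab
  apply hi
  have h1 : msupport μ ⊆ Set.Icc a b := by
    rw [← h]
    exact subset_convexHull ℝ _
  refine Set.Finite.subset (Set.Subsingleton.finite ?_) h1
  exact Set.subsingleton_Icc_of_ge (not_lt.mp hab)

lemma restr_eq {μ : Measure ℝ} {a b : ℝ} (h : μ (Set.Icc a b)ᶜ = 0) :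
    μ.restrict (Set.Icc a b) = μ :=
  Measure.restrict_eq_self_of_ae_mem (by
    rw [ae_iff]
    exact h)

lemma integ_of_cont {E : Type*} [NormedAddCommGroup E] {μ : Measure ℝ} [IsFiniteMeasure μ] {a b : ℝ}
    (h : μ (Set.Icc a b)ᶜ = 0)
    {f : ℝ → E} (hf : ContinuousOn f (Set.Icc a b)) : Integrable f μ := by
  rw [← restr_eq h]
  exact hf.integrableOn_compact isCompact_Icc

lemma integral_congr_K {E : Type*} [NormedAddCommGroup E] [NormedSpace ℝ E]
    {μ : Measure ℝ} {a b : ℝ} (h : μ (Set.Icc a b)ᶜ = 0)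
    {f g : ℝ → E} (hfg : ∀ x ∈ Set.Icc a b, f x = g x) : ∫ x, f x ∂μ = ∫ x, g x ∂μ := by
  apply integral_congr_ae
  have : ∀ᵐ x ∂μ, x ∈ Set.Icc a b := by
    rw [ae_iff]
    exact h
  filter_upwards [this] with x hx using hfg x hx

lemma isClosed_cpx (a b : ℝ) : IsClosed (cpx (Set.Icc a b)) := by
  apply IsCompact.isClosed
  exact isCompact_Icc.image Complex.continuous_ofReal

lemma sub_ne_of_notMem {a b : ℝ} {z : ℂ} (hz : z ∉ cpx (Set.Icc a b)) {t : ℝ}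
    (ht : t ∈ Set.Icc a b) : z - (t : ℂ) ≠ 0 := by
  intro h
  apply hz
  exact ⟨t, ht, (sub_eq_zero.mp h).symm⟩

lemma sub_ne_of_notMem' {a b : ℝ} {z : ℂ} (hz : z ∉ cpx (Set.Icc a b)) {t : ℝ}
    (ht : t ∈ Set.Icc a b) : (t : ℂ) - z ≠ 0 := by
  intro h
  apply hz
  exact ⟨t, ht, (sub_eq_zero.mp h)⟩

lemma cont_div {a b : ℝ} {z : ℂ} (hz : z ∉ cpx (Set.Icc a b)) {h : ℝ → ℂ}
    (hh : ContinuousOn h (Set.Icc a b)) :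
    ContinuousOn (fun t : ℝ => h t / (z - (t : ℂ))) (Set.Icc a b) :=
  hh.div (by fun_prop) (fun t ht => sub_ne_of_notMem hz ht)

lemma cont_div' {a b : ℝ} {z : ℂ} (hz : z ∉ cpx (Set.Icc a b)) {h : ℝ → ℂ}
    (hh : ContinuousOn h (Set.Icc a b)) :
    ContinuousOn (fun t : ℝ => h t / ((t : ℂ) - z)) (Set.Icc a b) :=
  hh.div (by fun_prop) (fun t ht => sub_ne_of_notMem' hz ht)

lemma ct_diff {μ : Measure ℝ} [IsFiniteMeasure μ] {a b : ℝ} (hK : μ (Set.Icc a b)ᶜ = 0)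
    {h : ℝ → ℂ} (hh : ContinuousOn h (Set.Icc a b)) {z : ℂ} (hz : z ∉ cpx (Set.Icc a b)) :
    DifferentiableAt ℂ (fun z : ℂ => ∫ t, h t / (z - (t : ℂ)) ∂μ) z := by
  have hmem : ∀ᵐ x ∂μ, x ∈ Set.Icc a b := by
    rw [ae_iff]
    exact hK
  have hopen : (cpx (Set.Icc a b))ᶜ ∈ nhds z := (isClosed_cpx a b).isOpen_compl.mem_nhds hz
  obtain ⟨ε, hε, hball⟩ := Metric.mem_nhds_iff.mp hopen
  have hdist : ∀ x ∈ Metric.ball z (ε / 2), ∀ t ∈ Set.Icc a b, ε / 2 ≤ ‖x - (t : ℂ)‖ := by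
    intro x hx t ht
    by_contra hlt
    push Not at hlt
    have : (t : ℂ) ∈ Metric.ball z ε := by
      rw [Metric.mem_ball, dist_comm]
      rw [Metric.mem_ball, dist_comm] at hx
      calc dist z t ≤ dist z x + dist x t := dist_triangle _ _ _
        _ < ε / 2 + ε / 2 := by
          rw [dist_eq_norm x]
          linarith
        _ = ε := by ring
    exact hball this ⟨t, ht, rfl⟩
  have hs : Metric.ball z (ε / 2) ∈ nhds z := Metric.ball_mem_nhds _ (by linarith)
  refine (hasDerivAt_integral_of_dominated_loc_of_deriv_le (μ := μ) (𝕜 := ℂ)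
    (F := fun z t => h t / (z - (t : ℂ)))
    (F' := fun z t => -(h t / (z - (t : ℂ)) ^ 2))
    (bound := fun t => ‖h t‖ / (ε / 2) ^ 2) hs ?_ ?_ ?_ ?_ ?_ ?_).2.differentiableAt
  · filter_upwards [hopen] with x hx
    exact (integ_of_cont hK (cont_div hx hh)).aestronglyMeasurable
  · exact integ_of_cont hK (cont_div hz hh)
  · refine (integ_of_cont hK ?_).aestronglyMeasurable
    refine (hh.div (by fun_prop) (fun t ht => ?_)).neg
    exact pow_ne_zero 2 (sub_ne_of_notMem hz ht)
  · filter_upwards [hmem] with t ht x hx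
    rw [norm_neg, norm_div, norm_pow]
    have := hdist x hx t ht
    gcongr
  · refine integ_of_cont hK ?_
    exact hh.norm.div_const _
  · filter_upwards [hmem] with t ht x hx
    have hne : x - (t : ℂ) ≠ 0 := by
      have := hdist x hx t ht
      intro h0
      rw [h0, norm_zero] at this
      linarith
    have h1 : HasDerivAt (fun x : ℂ => x - (t : ℂ)) 1 x := (hasDerivAt_id x).sub_const _
    have h2 := (h1.inv hne).const_mul (h t)
    have e : -(h t / (x - (t : ℂ)) ^ 2) = h t * (-1 / (x - (t : ℂ)) ^ 2) := by ring
    rw [e]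
    refine h2.congr_of_eventuallyEq (Filter.Eventually.of_forall fun y => ?_)
    simp [div_eq_mul_inv]

/-- A function which is a polynomial plus a Cauchy transform off `K` is analytic off `K`. -/
lemma ct_analytic {μ : Measure ℝ} [IsFiniteMeasure μ] {a b : ℝ} (hK : μ (Set.Icc a b)ᶜ = 0)
    {h : ℝ → ℂ} (hh : ContinuousOn h (Set.Icc a b)) (q : Polynomial ℂ) {F : ℂ → ℂ}
    (hF : ∀ z, z ∉ cpx (Set.Icc a b) → F z = q.eval z + ∫ t, h t / (z - (t : ℂ)) ∂μ)
    {z : ℂ} (hz : z ∉ cpx (Set.Icc a b)) : AnalyticAt ℂ F z := by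
  have hU : IsOpen (cpx (Set.Icc a b))ᶜ := (isClosed_cpx a b).isOpen_compl
  have hd : DifferentiableOn ℂ F (cpx (Set.Icc a b))ᶜ := by
    have h1 : DifferentiableOn ℂ (fun z => q.eval z + ∫ t, h t / (z - (t : ℂ)) ∂μ)
        (cpx (Set.Icc a b))ᶜ := by
      intro w hw
      exact (q.differentiable.differentiableAt.add (ct_diff hK hh hw)).differentiableWithinAt
    exact h1.congr hF
  exact hd.analyticAt (hU.mem_nhds hz)

/-- Multiplication of a Cauchy transform by a polynomial. -/
lemma poly_mul_ct {μ : Measure ℝ} [IsFiniteMeasure μ] {a b : ℝ} (hK : μ (Set.Icc a b)ᶜ = 0)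
    {h : ℝ → ℂ} (hh : ContinuousOn h (Set.Icc a b)) :
    ∀ (n : ℕ) (p : Polynomial ℂ), p.degree < (n : WithBot ℕ) →
      ∃ q : Polynomial ℂ, q.degree < (n : WithBot ℕ) ∧ ∀ z, z ∉ cpx (Set.Icc a b) →
        p.eval z * ∫ t, h t / (z - (t : ℂ)) ∂μ =
          q.eval z + ∫ t, (p.eval (t : ℂ) * h t) / (z - (t : ℂ)) ∂μ := by
  intro n
  induction n with
  | zero =>
    intro p hp
    have : p = 0 := by
      rw [← Polynomial.degree_eq_bot]
      exact Nat.WithBot.lt_zero_iff.mp hp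
    refine ⟨0, by simp, ?_⟩
    intro z hz
    simp [this]
  | succ n ih =>
    intro p hp
    have hp1 : p.divX.degree < (n : WithBot ℕ) := by
      rw [Polynomial.degree_lt_iff_coeff_zero] at hp ⊢
      intro m hm
      rw [Polynomial.coeff_divX]
      exact hp _ (by omega)
    obtain ⟨q1, hq1, hq⟩ := ih p.divX hp1
    refine ⟨X * q1 + C (∫ t, p.divX.eval (t : ℂ) * h t ∂μ), ?_, ?_⟩
    · rw [Polynomial.degree_lt_iff_coeff_zero] at hq1 ⊢
      intro m hm
      obtain ⟨m, rfl⟩ : ∃ k, m = k + 1 := ⟨m - 1, by omega⟩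
      rw [Polynomial.coeff_add, Polynomial.coeff_X_mul, hq1 m (by omega)]
      simp
    · intro z hz
      have hp_eq : ∀ w : ℂ, p.eval w = w * p.divX.eval w + p.coeff 0 := by
        intro w
        have := congrArg (Polynomial.eval w) (Polynomial.divX_mul_X_add p)
        rw [← this]
        simp only [Polynomial.eval_add, Polynomial.eval_mul, Polynomial.eval_X, Polynomial.eval_C]
        ring
      have hcp : ContinuousOn (fun t : ℝ => p.divX.eval (t : ℂ) * h t) (Set.Icc a b) :=
        ContinuousOn.mul (by fun_prop) hh
      have e1 : ∫ t, (p.eval (t : ℂ) * h t) / (z - (t : ℂ)) ∂μ =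
          z * (∫ t, (p.divX.eval (t : ℂ) * h t) / (z - (t : ℂ)) ∂μ)
          - (∫ t, p.divX.eval (t : ℂ) * h t ∂μ)
          + p.coeff 0 * ∫ t, h t / (z - (t : ℂ)) ∂μ := by
        rw [← integral_const_mul, ← integral_const_mul, ← integral_sub, ← integral_add]
        · apply integral_congr_K hK
          intro t ht
          have := sub_ne_of_notMem hz ht
          rw [hp_eq]
          field_simp
          ring
        · exact ((integ_of_cont hK (cont_div hz hcp)).const_mul z).sub (integ_of_cont hK hcp)
        · exact (integ_of_cont hK (cont_div hz hh)).const_mul _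
        · exact (integ_of_cont hK (cont_div hz hcp)).const_mul z
        · exact integ_of_cont hK hcp
      rw [e1, hp_eq, add_mul, mul_assoc, hq z hz]
      simp only [Polynomial.eval_add, Polynomial.eval_mul, Polynomial.eval_X, Polynomial.eval_C]
      ring

/-- Orthogonality to all polynomials of degree `< r`. -/
def Orth (μ : Measure ℝ) (r : ℕ) (h : ℝ → ℂ) : Prop :=
  ∀ p : Polynomial ℂ, p.degree < (r : WithBot ℕ) → ∫ t, p.eval (t : ℂ) * h t ∂μ = 0

lemma orth_of_monomials {μ : Measure ℝ} [IsFiniteMeasure μ] {a b : ℝ}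
    (hK : μ (Set.Icc a b)ᶜ = 0)
    {h : ℝ → ℂ} (hh : ContinuousOn h (Set.Icc a b)) {r : ℕ}
    (H : ∀ ν < r, ∫ t, (t : ℂ) ^ ν * h t ∂μ = 0) : Orth μ r h := by
  intro p hp
  by_cases hp0 : p = 0
  · simp [hp0]
  have hn : p.natDegree < r := (Polynomial.natDegree_lt_iff_degree_lt hp0).mpr hp
  have : ∀ t : ℝ, p.eval (t : ℂ) * h t = ∑ i ∈ Finset.range r, p.coeff i * ((t : ℂ) ^ i * h t) := by
    intro t
    rw [Polynomial.eval_eq_sum_range' hn, Finset.sum_mul]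
    exact Finset.sum_congr rfl (fun i _ => by ring)
  simp_rw [this]
  rw [integral_finsetSum]
  · apply Finset.sum_eq_zero
    intro i hi
    rw [integral_const_mul, H i (Finset.mem_range.mp hi), mul_zero]
  · intro i _
    exact (integ_of_cont hK (ContinuousOn.mul (by fun_prop) hh)).const_mul _

lemma orth_div {μ : Measure ℝ} [IsFiniteMeasure μ] {a b : ℝ} (hK : μ (Set.Icc a b)ᶜ = 0)
    {h : ℝ → ℂ} (hh : ContinuousOn h (Set.Icc a b)) {r : ℕ} (ho : Orth μ r h)
    {s : ℂ} (hs : s ∉ cpx (Set.Icc a b)) (h0 : ∫ t, h t / (s - (t : ℂ)) ∂μ = 0) :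
    Orth μ (r + 1) (fun t => h t / ((t : ℂ) - s)) := by
  intro p hp
  have hp1 : (p /ₘ (X - C s)).degree < (r : WithBot ℕ) := by
    by_cases hr : p /ₘ (X - C s) = 0
    · rw [hr, Polynomial.degree_zero]
      exact WithBot.bot_lt_coe r
    · have hp0 : p ≠ 0 := by
        rintro rfl
        simp at hr
      rw [Polynomial.degree_eq_natDegree hp0] at hp
      rw [Polynomial.degree_eq_natDegree hr, Polynomial.natDegree_divByMonic _ (monic_X_sub_C s),
        Polynomial.natDegree_X_sub_C]
      have h2 : 1 ≤ p.natDegree := by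
        by_contra hlt
        apply hr
        rw [Polynomial.divByMonic_eq_zero_iff (monic_X_sub_C s), Polynomial.degree_X_sub_C,
          Polynomial.degree_eq_natDegree hp0]
        exact_mod_cast not_le.mp hlt
      have h3 : p.natDegree < r + 1 := by exact_mod_cast hp
      exact_mod_cast (by omega : p.natDegree - 1 < r)
  have hpe : ∀ w : ℂ, p.eval w = (w - s) * (p /ₘ (X - C s)).eval w + p.eval s := by
    intro w
    conv_lhs => rw [← Polynomial.modByMonic_add_div p (X - C s)]
    rw [Polynomial.modByMonic_X_sub_C_eq_C_eval]
    simp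
    ring
  have e1 : ∫ t, p.eval (t : ℂ) * (h t / ((t : ℂ) - s)) ∂μ =
      (∫ t, (p /ₘ (X - C s)).eval (t : ℂ) * h t ∂μ) -
        p.eval s * ∫ t, h t / (s - (t : ℂ)) ∂μ := by
    rw [← integral_const_mul, ← integral_sub]
    · apply integral_congr_K hK
      intro t ht
      have h1 := sub_ne_of_notMem hs ht
      have h2 := sub_ne_of_notMem' hs ht
      rw [hpe, ← neg_sub (t : ℂ) s, div_neg]
      field_simp
      ring
    · exact integ_of_cont hK (ContinuousOn.mul (by fun_prop) hh)
    · exact (integ_of_cont hK (cont_div hs hh)).const_mul _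
  rw [e1, h0, ho _ hp1]
  simp

lemma deg_divByMonic {r : ℕ} {p : Polynomial ℂ} (hp : p.degree < ((r + 1 : ℕ) : WithBot ℕ)) (s : ℂ) :
    (p /ₘ (X - C s)).degree < (r : WithBot ℕ) := by
  by_cases hr : p /ₘ (X - C s) = 0
  · rw [hr, Polynomial.degree_zero]
    exact WithBot.bot_lt_coe r
  · have hp0 : p ≠ 0 := by
      rintro rfl
      simp at hr
    rw [Polynomial.degree_eq_natDegree hp0] at hp
    rw [Polynomial.degree_eq_natDegree hr, Polynomial.natDegree_divByMonic _ (monic_X_sub_C s),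
      Polynomial.natDegree_X_sub_C]
    have h2 : 1 ≤ p.natDegree := by
      by_contra hlt
      apply hr
      rw [Polynomial.divByMonic_eq_zero_iff (monic_X_sub_C s), Polynomial.degree_X_sub_C,
        Polynomial.degree_eq_natDegree hp0]
      exact_mod_cast not_le.mp hlt
    have h3 : p.natDegree < r + 1 := by exact_mod_cast hp
    exact_mod_cast (by omega : p.natDegree - 1 < r)

lemma eval_divByMonic (p : Polynomial ℂ) (s w : ℂ) :
    p.eval w = (w - s) * (p /ₘ (X - C s)).eval w + p.eval s := by
  conv_lhs => rw [← Polynomial.modByMonic_add_div p (X - C s)]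
  rw [Polynomial.modByMonic_X_sub_C_eq_C_eval]
  simp
  ring

lemma orth_congr {μ : Measure ℝ} {a b : ℝ} (hK : μ (Set.Icc a b)ᶜ = 0) {h h' : ℝ → ℂ} {r : ℕ}
    (ho : Orth μ r h) (hh : ∀ t ∈ Set.Icc a b, h t = h' t) : Orth μ r h' := by
  intro p hp
  rw [← ho p hp]
  exact integral_congr_K hK (fun t ht => by rw [hh t ht])

/-- Dividing out the zeros. -/
lemma div_zeros {μ : Measure ℝ} [IsFiniteMeasure μ] {a b : ℝ} (hK : μ (Set.Icc a b)ᶜ = 0)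
    (S : Finset ℂ) (hS : ∀ x ∈ S, x ∉ cpx (Set.Icc a b)) :
    ∀ (N : ℕ) (ord : ℂ → ℕ), ∑ x ∈ S, ord x = N → ∀ (d r : ℕ) (q : Polynomial ℂ) (h : ℝ → ℂ)
      (F : ℂ → ℂ), ContinuousOn h (Set.Icc a b) → q.degree < (d : WithBot ℕ) →
      (∀ z, z ∉ cpx (Set.Icc a b) → F z = q.eval z + ∫ t, h t / (z - (t : ℂ)) ∂μ) →
      (∀ x ∈ S, (ord x : ℕ∞) ≤ analyticOrderAt F x) → Orth μ r h → (d = 0 ∨ r = 0) → d ≤ N →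
      Orth μ (r + N - d) (fun t => h t / ∏ s ∈ S, ((t : ℂ) - s) ^ ord s) := by
  intro N
  induction N with
  | zero =>
    intro ord hord d r q h F hh hq hF hz ho hdr hd
    obtain rfl : d = 0 := by omega
    have : ∀ x ∈ S, ord x = 0 := by
      intro x hx
      exact (Finset.sum_eq_zero_iff.mp hord) x hx
    refine orth_congr hK (h := h) (by simpa using ho) (fun t _ => ?_)
    rw [Finset.prod_congr rfl (fun s hs => by rw [this s hs, pow_zero])]
    simp
  | succ N ih =>
    intro ord hord d r q h F hh hq hF hz ho hdr hd
    obtain ⟨s, hsS, hs0⟩ : ∃ s ∈ S, ord s ≠ 0 := by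
      by_contra hcon
      push Not at hcon
      rw [Finset.sum_eq_zero hcon] at hord
      omega
    have hsK := hS s hsS
    have hFan : ∀ z, z ∉ cpx (Set.Icc a b) → AnalyticAt ℂ F z := fun z hz =>
      ct_analytic hK hh q hF hz
    have hFs : F s = 0 := by
      have h1 := hz s hsS
      have h2 : analyticOrderAt F s ≠ 0 := by
        intro h0
        rw [h0] at h1
        have : (ord s : ℕ∞) = 0 := le_antisymm h1 zero_le
        exact hs0 (by exact_mod_cast this)
      exact (((hFan s hsK).analyticOrderAt_ne_zero).mp h2)
    set h1 : ℝ → ℂ := fun t => h t / ((t : ℂ) - s) with hh1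
    have hc1 : ContinuousOn h1 (Set.Icc a b) := cont_div' hsK hh
    set q1 := q /ₘ (X - C s) with hq1
    have hq1d : q1.degree < ((d - 1 : ℕ) : WithBot ℕ) := by
      rcases Nat.eq_zero_or_pos d with hd0 | hd0
      · have : q = 0 := by
          rw [← Polynomial.degree_eq_bot]
          rw [hd0] at hq
          exact Nat.WithBot.lt_zero_iff.mp hq
        rw [hq1, this, Polynomial.zero_divByMonic, Polynomial.degree_zero]
        exact WithBot.bot_lt_coe _
      · apply deg_divByMonic
        rwa [Nat.sub_add_cancel hd0]
    set F1 : ℂ → ℂ := fun z => q1.eval z + ∫ t, h1 t / (z - (t : ℂ)) ∂μ with hF1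
    have hfac : ∀ z, z ∉ cpx (Set.Icc a b) → F z = (z - s) * F1 z := by
      intro z hz
      have e1 : (z - s) * ∫ t, h1 t / (z - (t : ℂ)) ∂μ =
          (∫ t, h t / (z - (t : ℂ)) ∂μ) - ∫ t, h t / (s - (t : ℂ)) ∂μ := by
        rw [← integral_const_mul, ← integral_sub]
        · apply integral_congr_K hK
          intro t ht
          have n1 := sub_ne_of_notMem hz ht
          have n2 := sub_ne_of_notMem hsK ht
          have n3 := sub_ne_of_notMem' hsK ht
          simp only [hh1]
          rw [← neg_sub (t : ℂ) s, div_neg]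
          field_simp
          ring
        · exact integ_of_cont hK (cont_div hz hh)
        · exact integ_of_cont hK (cont_div hsK hh)
      have e2 : F z = F z - F s := by rw [hFs, sub_zero]
      rw [e2, hF z hz, hF s hsK, hF1]
      simp only []
      rw [mul_add, e1, eval_divByMonic q s z]
      ring
    have hF1an : ∀ z, z ∉ cpx (Set.Icc a b) → AnalyticAt ℂ F1 z := fun z hz =>
      ct_analytic hK hc1 q1 (fun _ _ => rfl) hz
    have horder : ∀ z, z ∉ cpx (Set.Icc a b) →
        analyticOrderAt F z = analyticOrderAt (fun w : ℂ => w - s) z + analyticOrderAt F1 z := by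
      intro z hz
      rw [← analyticOrderAt_mul (by fun_prop) (hF1an z hz)]
      apply analyticOrderAt_congr
      filter_upwards [(isClosed_cpx a b).isOpen_compl.mem_nhds hz] with w hw
      exact hfac w hw
    set ord1 : ℂ → ℕ := fun x => if x = s then ord x - 1 else ord x with hord1
    have hs1 : ∑ x ∈ S, ord1 x = N := by
      rw [← Finset.add_sum_erase _ _ hsS] at hord ⊢
      have : ∑ x ∈ S.erase s, ord1 x = ∑ x ∈ S.erase s, ord x := by
        apply Finset.sum_congr rfl
        intro x hx
        simp [hord1, Finset.ne_of_mem_erase hx]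
      rw [this]
      simp only [hord1, if_true]
      omega
    have hz1 : ∀ x ∈ S, (ord1 x : ℕ∞) ≤ analyticOrderAt F1 x := by
      intro x hx
      have h2 := hz x hx
      rw [horder x (hS x hx)] at h2
      by_cases hxs : x = s
      · subst hxs
        have h3 : analyticOrderAt (fun w : ℂ => w - x) x = 1 := analyticOrderAt_id_sub_const_self
        rw [h3] at h2
        simp only [hord1, if_true]
        have h4 : (ord x : ℕ∞) = 1 + ((ord x - 1 : ℕ) : ℕ∞) := by
          have : ord x = 1 + (ord x - 1) := by omega
          conv_lhs => rw [this]
          push_cast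
          rfl
        rw [h4] at h2
        exact (ENat.add_le_add_iff_left (by simp)).mp h2
      · have h3 : analyticOrderAt (fun w : ℂ => w - s) x = 0 :=
          analyticOrderAt_id_sub_const_of_ne hxs
        rw [h3, zero_add] at h2
        simpa [hord1, hxs] using h2
    have hprod : ∀ t ∈ Set.Icc a b, h1 t / ∏ s ∈ S, ((t : ℂ) - s) ^ ord1 s =
        h t / ∏ s ∈ S, ((t : ℂ) - s) ^ ord s := by
      intro t ht
      have n3 := sub_ne_of_notMem' hsK ht
      rw [← Finset.mul_prod_erase _ _ hsS, ← Finset.mul_prod_erase S _ hsS]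
      have : ∏ x ∈ S.erase s, ((t : ℂ) - x) ^ ord1 x = ∏ x ∈ S.erase s, ((t : ℂ) - x) ^ ord x := by
        apply Finset.prod_congr rfl
        intro x hx
        simp [hord1, Finset.ne_of_mem_erase hx]
      rw [this]
      simp only [hord1, if_true, hh1]
      rw [div_div, ← mul_assoc, ← pow_succ', Nat.sub_add_cancel (by omega)]
    rcases Nat.eq_zero_or_pos d with hd0 | hd0
    · subst hd0
      have hq0 : q = 0 := by
        rw [← Polynomial.degree_eq_bot]
        exact Nat.WithBot.lt_zero_iff.mp hq
      have hIint : ∫ t, h t / (s - (t : ℂ)) ∂μ = 0 := by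
        rw [hF s hsK, hq0] at hFs
        simpa using hFs
      have := ih ord1 hs1 0 (r + 1) q1 h1 F1 hc1 hq1d (fun _ _ => rfl) hz1
        (orth_div hK hh ho hsK hIint) (Or.inl rfl) (by omega)
      have e : r + (N + 1) - 0 = r + 1 + N - 0 := by omega
      rw [e]
      exact orth_congr hK this hprod
    · have hr0 : r = 0 := by
        rcases hdr with h | h
        · omega
        · exact h
      subst hr0
      have ho0 : Orth μ 0 h1 := by
        intro p hp
        have : p = 0 := by
          rw [← Polynomial.degree_eq_bot]
          exact Nat.WithBot.lt_zero_iff.mp hp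
        simp [this]
      have := ih ord1 hs1 (d - 1) 0 q1 h1 F1 hc1 hq1d (fun _ _ => rfl) hz1
        ho0 (Or.inr rfl) (by omega)
      have e : 0 + (N + 1) - d = 0 + N - (d - 1) := by omega
      rw [e]
      exact orth_congr hK this hprod

lemma zero_on_support {μ : Measure ℝ} [IsFiniteMeasure μ] {a b : ℝ}
    (hK : μ (Set.Icc a b)ᶜ = 0) (hsub : msupport μ ⊆ Set.Icc a b) {k : ℝ → ℝ}
    (hk : ContinuousOn k (Set.Icc a b)) (hpos : ∀ x ∈ Set.Icc a b, 0 ≤ k x)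
    (h0 : ∫ x, k x ∂μ = 0) : ∀ x ∈ msupport μ, k x = 0 := by
  have hmem : ∀ᵐ x ∂μ, x ∈ Set.Icc a b := by
    rw [ae_iff]
    exact hK
  have hae : k =ᵐ[μ] 0 := by
    rw [← integral_eq_zero_iff_of_nonneg_ae _ (integ_of_cont hK hk)]
    · exact h0
    · filter_upwards [hmem] with x hx using hpos x hx
  intro x hx
  by_contra hne
  have hxK := hsub hx
  have hev : ∀ᶠ y in nhdsWithin x (Set.Icc a b), k y ≠ 0 := (hk x hxK).eventually_ne hne
  rw [eventually_nhdsWithin_iff, eventually_nhds_iff] at hev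
  obtain ⟨U, hU, hUo, hxU⟩ := hev
  apply hx U hUo hxU
  have : ∀ᵐ y ∂μ, y ∉ U := by
    filter_upwards [hmem, hae] with y hy hy0 hyU
    exact hU y hyU hy hy0
  rw [ae_iff] at this
  simpa using this

lemma zero_of_signChange {f : ℝ → ℝ} {x : ℝ} (hf : ContinuousAt f x) (h : SignChangeAt f x) :
    f x = 0 := by
  by_contra hne
  have hev : ∀ᶠ y in nhds x, 0 < f y * f x := by
    have : ContinuousAt (fun y => f y * f x) x := hf.mul continuousAt_const
    exact this.eventually (lt_mem_nhds (mul_self_pos.mpr hne))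
  obtain ⟨δ, hδ, hb⟩ := Metric.eventually_nhds_iff.mp hev
  obtain ⟨u, v, hu, hv, huv⟩ := h δ hδ
  have h1 := hb (y := u) (by rwa [Real.dist_eq])
  have h2 := hb (y := v) (by rwa [Real.dist_eq])
  have h3 := mul_pos h1 h2
  nlinarith [sq_nonneg (f x)]

lemma exists_signChange {h : ℝ → ℝ} {u v : ℝ} (huv : u < v) (hc : ContinuousOn h (Set.Icc u v))
    (hfin : {x ∈ Set.Icc u v | h x = 0}.Finite) (hu : 0 < h u) (hv : h v < 0) :
    ∃ x ∈ Set.Ioo u v, SignChangeAt h x := by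
  set A := {x ∈ Set.Icc u v | 0 < h x} with hA
  have huA : u ∈ A := ⟨⟨le_rfl, huv.le⟩, hu⟩
  have hbdd : BddAbove A := ⟨v, fun x hx => hx.1.2⟩
  set x0 := sSup A with hx0
  have hx0u : u ≤ x0 := le_csSup hbdd huA
  have hx0v : x0 ≤ v := csSup_le ⟨u, huA⟩ (fun x hx => hx.1.2)
  have hlt : x0 < v := by
    have hev : ∀ᶠ y in nhdsWithin v (Set.Icc u v), h y < 0 :=
      (hc v ⟨huv.le, le_rfl⟩).eventually (gt_mem_nhds hv)
    rw [eventually_nhdsWithin_iff] at hev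
    obtain ⟨δ, hδ, hb⟩ := Metric.eventually_nhds_iff.mp hev
    have : x0 ≤ v - δ := by
      apply csSup_le ⟨u, huA⟩
      intro x hx
      by_contra hcon
      push Not at hcon
      have := hb (y := x) (by rw [Real.dist_eq, abs_lt]; constructor <;> linarith [hx.1.2]) hx.1
      linarith [hx.2]
    linarith
  have hgt : u < x0 := by
    have hev : ∀ᶠ y in nhdsWithin u (Set.Icc u v), 0 < h y :=
      (hc u ⟨le_rfl, huv.le⟩).eventually (lt_mem_nhds hu)
    rw [eventually_nhdsWithin_iff] at hev
    obtain ⟨δ, hδ, hb⟩ := Metric.eventually_nhds_iff.mp hev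
    have hm : 0 < min (δ / 2) (v - u) := lt_min (by linarith) (by linarith)
    have h1 := min_le_left (δ / 2) (v - u)
    have h2 := min_le_right (δ / 2) (v - u)
    have hyI : u + min (δ / 2) (v - u) ∈ Set.Icc u v := ⟨by linarith, by linarith⟩
    have := hb (y := u + min (δ / 2) (v - u))
      (by rw [Real.dist_eq, abs_lt]; constructor <;> linarith) hyI
    have : u + min (δ / 2) (v - u) ≤ x0 := le_csSup hbdd ⟨hyI, this⟩
    linarith
  refine ⟨x0, ⟨hgt, hlt⟩, ?_⟩
  intro δ hδ
  obtain ⟨p, hpA, hp⟩ := exists_lt_of_lt_csSup ⟨u, huA⟩ (show x0 - δ < sSup A by linarith)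
  have hpx : p ≤ x0 := le_csSup hbdd hpA
  have hinf : (Set.Ioo x0 (min v (x0 + δ))).Infinite :=
    Set.Ioo_infinite (lt_min hlt (by linarith))
  obtain ⟨y, hy, hyn⟩ := (hinf.sdiff hfin).nonempty
  have hyv : y < v := lt_of_lt_of_le hy.2 (min_le_left _ _)
  have hyd : y < x0 + δ := lt_of_lt_of_le hy.2 (min_le_right _ _)
  have hyI : y ∈ Set.Icc u v := ⟨by linarith [hy.1], hyv.le⟩
  have hy0 : h y ≠ 0 := fun h0 => hyn ⟨hyI, h0⟩
  have hyneg : h y < 0 := by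
    rcases lt_trichotomy (h y) 0 with h1 | h1 | h1
    · exact h1
    · exact absurd h1 hy0
    · have := le_csSup hbdd (show y ∈ A from ⟨hyI, h1⟩)
      linarith [hy.1]
  refine ⟨p, y, ?_, ?_, mul_neg_of_pos_of_neg hpA.2 hyneg⟩
  · rw [abs_lt]
    constructor <;> linarith
  · rw [abs_lt]
    constructor <;> linarith [hy.1]

lemma signChange_neg {h : ℝ → ℝ} {x : ℝ} (hs : SignChangeAt (fun y => - h y) x) :
    SignChangeAt h x := by
  intro δ hδ
  obtain ⟨u, v, hu, hv, huv⟩ := hs δ hδ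
  exact ⟨u, v, hu, hv, by simpa using huv⟩

lemma const_sign_of_no_change {h : ℝ → ℝ} {a b : ℝ} (hc : ContinuousOn h (Set.Icc a b))
    (hfin : {x ∈ Set.Icc a b | h x = 0}.Finite) (hno : ∀ x ∈ Set.Ioo a b, ¬ SignChangeAt h x) :
    (∀ x ∈ Set.Icc a b, 0 ≤ h x) ∨ (∀ x ∈ Set.Icc a b, h x ≤ 0) := by
  by_contra hcon
  push Not at hcon
  obtain ⟨⟨v, hvI, hv⟩, ⟨u, huI, hu⟩⟩ := hcon
  have hsub : ∀ p ∈ Set.Icc a b, ∀ q ∈ Set.Icc a b, Set.Icc p q ⊆ Set.Icc a b := by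
    intro p hp q hq x hx
    exact ⟨hp.1.trans hx.1, hx.2.trans hq.2⟩
  rcases lt_trichotomy u v with huv | huv | huv
  · obtain ⟨x, hx, hs⟩ := exists_signChange huv (hc.mono (hsub u huI v hvI))
      (hfin.subset (fun x hx => ⟨hsub u huI v hvI hx.1, hx.2⟩)) hu hv
    exact hno x ⟨lt_of_le_of_lt huI.1 hx.1, lt_of_lt_of_le hx.2 hvI.2⟩ hs
  · subst huv
    linarith
  · obtain ⟨x, hx, hs⟩ := exists_signChange (h := fun y => - h y) huv
      (hc.mono (hsub v hvI u huI)).neg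
      (hfin.subset (fun x hx => ⟨hsub v hvI u huI hx.1, by simpa using hx.2⟩))
      (by simpa using hv) (by simpa using hu)
    exact hno x ⟨lt_of_le_of_lt hvI.1 hx.1, lt_of_lt_of_le hx.2 huI.2⟩ (signChange_neg hs)

lemma same_sign {f : ℝ → ℝ} {p q : ℝ} (hc : ContinuousOn f (Set.uIcc p q))
    (hz : ∀ x ∈ Set.uIcc p q, f x ≠ 0) : 0 < f p * f q := by
  by_contra hcon
  push Not at hcon
  have h0 : (0 : ℝ) ∈ Set.uIcc (f p) (f q) := by
    rw [Set.mem_uIcc]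
    rcases le_total (f p) 0 with h1 | h1
    · rcases le_total 0 (f q) with h2 | h2
      · exact Or.inl ⟨h1, h2⟩
      · have := hz p Set.left_mem_uIcc
        have h3 := hz q Set.right_mem_uIcc
        have : 0 < f p * f q := mul_pos_of_neg_of_neg (lt_of_le_of_ne h1 this)
          (lt_of_le_of_ne h2 h3)
        linarith
    · rcases le_total 0 (f q) with h2 | h2
      · have := hz p Set.left_mem_uIcc
        have h3 := hz q Set.right_mem_uIcc
        have : 0 < f p * f q := mul_pos (lt_of_le_of_ne h1 this.symm)
          (lt_of_le_of_ne h2 h3.symm)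
        linarith
      · exact Or.inr ⟨h2, h1⟩
  obtain ⟨x, hx, hx0⟩ := intermediate_value_uIcc hc h0
  exact hz x hx hx0

lemma const_sign_mul_prod {f : ℝ → ℝ} {a b : ℝ} (hc : ContinuousOn f (Set.Icc a b))
    (hfin : {x ∈ Set.Icc a b | f x = 0}.Finite) (T : Finset ℝ)
    (hT : ∀ x, x ∈ T ↔ x ∈ Set.Ioo a b ∧ SignChangeAt f x) :
    (∀ x ∈ Set.Icc a b, 0 ≤ f x * ∏ t ∈ T, (x - t)) ∨
      (∀ x ∈ Set.Icc a b, f x * ∏ t ∈ T, (x - t) ≤ 0) := by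
  have hPc : ∀ T' : Finset ℝ, Continuous (fun x : ℝ => ∏ t ∈ T', (x - t)) := by
    intro T'
    fun_prop
  have hPloc : ∀ T' : Finset ℝ, ∀ x ∉ T', ∃ δ > 0, ∀ u v : ℝ, |u - x| < δ → |v - x| < δ →
      0 < (∏ t ∈ T', (u - t)) * ∏ t ∈ T', (v - t) := by
    intro T' x hx
    have hne : ∏ t ∈ T', (x - t) ≠ 0 := by
      rw [Finset.prod_ne_zero_iff]
      intro t ht h0
      apply hx
      rwa [sub_eq_zero.mp h0]
    have hev : ∀ᶠ y in nhds x, 0 < (∏ t ∈ T', (y - t)) * ∏ t ∈ T', (x - t) := by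
      have : Continuous (fun y => (∏ t ∈ T', (y - t)) * ∏ t ∈ T', (x - t)) :=
        (hPc T').mul continuous_const
      exact this.continuousAt.eventually (lt_mem_nhds (mul_self_pos.mpr hne))
    obtain ⟨δ, hδ, hb⟩ := Metric.eventually_nhds_iff.mp hev
    refine ⟨δ, hδ, fun u v hu hv => ?_⟩
    have h1 := hb (y := u) (by rwa [Real.dist_eq])
    have h2 := hb (y := v) (by rwa [Real.dist_eq])
    have h3 := mul_pos h1 h2
    have h4 : 0 < ((∏ t ∈ T', (u - t)) * ∏ t ∈ T', (v - t)) * (∏ t ∈ T', (x - t)) ^ 2 := by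
      nlinarith
    exact pos_of_mul_pos_left h4 (sq_nonneg _)
  apply const_sign_of_no_change
  · exact hc.mul (hPc T).continuousOn
  · refine (hfin.union T.finite_toSet).subset ?_
    rintro x ⟨hx, hx0⟩
    rcases mul_eq_zero.mp hx0 with h0 | h0
    · exact Or.inl ⟨hx, h0⟩
    · right
      obtain ⟨t, ht, ht0⟩ := Finset.prod_eq_zero_iff.mp h0
      rw [sub_eq_zero.mp ht0]
      exact ht
  · intro x hx hs
    by_cases hxT : x ∈ T
    · have hch := ((hT x).mp hxT).2
      have hnhds : Set.Icc a b ∈ nhds x := Icc_mem_nhds hx.1 hx.2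
      have hfx : f x = 0 := zero_of_signChange (hc.continuousAt hnhds) hch
      -- isolate the zero
      have hfin' : ({y ∈ Set.Icc a b | f y = 0} \ {x}).Finite := hfin.subset Set.sdiff_subset
      have hopen : (({y ∈ Set.Icc a b | f y = 0} \ {x})ᶜ ∩ Set.Icc a b) ∈ nhds x := by
        apply Filter.inter_mem _ hnhds
        apply hfin'.isClosed.isOpen_compl.mem_nhds
        simp
      obtain ⟨δ1, hδ1, hb1⟩ := Metric.mem_nhds_iff.mp hopen
      have hnz : ∀ y, |y - x| < δ1 → y ≠ x → f y ≠ 0 := by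
        intro y hy hyx h0
        have := hb1 (show y ∈ Metric.ball x δ1 by rwa [Metric.mem_ball, Real.dist_eq])
        exact this.1 ⟨⟨this.2, h0⟩, hyx⟩
      have hcb : ∀ p q, |p - x| < δ1 → |q - x| < δ1 → 0 < (p - x) * (q - x) → 0 < f p * f q := by
        intro p q hp hq hpq
        have hin : ∀ y ∈ Set.uIcc p q, |y - x| < δ1 ∧ y ≠ x := by
          intro y hy
          rw [abs_lt] at hp hq ⊢
          rcases Set.mem_uIcc.mp hy with ⟨h1, h2⟩ | ⟨h1, h2⟩
          · refine ⟨⟨by linarith, by linarith⟩, ?_⟩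
            rintro rfl
            nlinarith
          · refine ⟨⟨by linarith, by linarith⟩, ?_⟩
            rintro rfl
            nlinarith
        apply same_sign
        · apply hc.mono
          intro y hy
          exact (hb1 (show y ∈ Metric.ball x δ1 by
            rw [Metric.mem_ball, Real.dist_eq]
            exact (hin y hy).1)).2
        · intro y hy
          exact hnz y (hin y hy).1 (hin y hy).2
      obtain ⟨u0, v0, hu0, hv0, huv0⟩ := hch δ1 hδ1
      have hu0x : u0 ≠ x := by
        rintro rfl
        rw [hfx] at huv0
        simp at huv0
      have hv0x : v0 ≠ x := by
        rintro rfl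
        rw [hfx] at huv0
        simp at huv0
      have hopp : (u0 - x) * (v0 - x) < 0 := by
        rcases lt_trichotomy ((u0 - x) * (v0 - x)) 0 with h1 | h1 | h1
        · exact h1
        · exfalso
          rcases mul_eq_zero.mp h1 with h2 | h2
          · exact hu0x (sub_eq_zero.mp h2)
          · exact hv0x (sub_eq_zero.mp h2)
        · have := hcb u0 v0 hu0 hv0 h1
          linarith
      -- `(y - x) f y` has the same sign on both sides
      have hkey : ∀ p, |p - x| < δ1 → p ≠ x → 0 < ((p - x) * f p) * ((u0 - x) * f u0) := by
        intro p hp hpx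
        have hpx' : p - x ≠ 0 := sub_ne_zero.mpr hpx
        have hu0x' : u0 - x ≠ 0 := sub_ne_zero.mpr hu0x
        rcases lt_or_gt_of_ne (mul_ne_zero hpx' hu0x') with h1 | h1
        · have h2 : 0 < (p - x) * (v0 - x) := by
            have h3 := mul_pos_of_neg_of_neg h1 hopp
            have h4 : 0 < ((p - x) * (v0 - x)) * (u0 - x) ^ 2 := by nlinarith
            exact pos_of_mul_pos_left h4 (sq_nonneg _)
          have h3 := hcb p v0 hp hv0 h2
          have h4 : f p * f u0 < 0 := by
            have h5 := mul_neg_of_pos_of_neg h3 huv0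
            by_contra hcon
            push Not at hcon
            nlinarith [sq_nonneg (f v0)]
          nlinarith
        · have h3 := hcb p u0 hp hu0 h1
          nlinarith
      have hkey2 : ∀ p q, |p - x| < δ1 → |q - x| < δ1 →
          0 ≤ ((p - x) * f p) * ((q - x) * f q) := by
        intro p q hp hq
        by_cases hpx : p = x
        · simp [hpx]
        by_cases hqx : q = x
        · simp [hqx]
        have h1 := hkey p hp hpx
        have h2 := hkey q hq hqx
        have h3 := mul_pos h1 h2
        have h4 : 0 < (((p - x) * f p) * ((q - x) * f q)) * ((u0 - x) * f u0) ^ 2 := by nlinarith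
        exact (pos_of_mul_pos_left h4 (sq_nonneg _)).le
      obtain ⟨δ2, hδ2, hb2⟩ := hPloc (T.erase x) x (Finset.notMem_erase x T)
      obtain ⟨u, v, hu, hv, huv⟩ := hs (min δ1 δ2) (lt_min hδ1 hδ2)
      have h1 := hkey2 u v (lt_of_lt_of_le hu (min_le_left _ _)) (lt_of_lt_of_le hv (min_le_left _ _))
      have h2 := hb2 u v (lt_of_lt_of_le hu (min_le_right _ _))
        (lt_of_lt_of_le hv (min_le_right _ _))
      simp only [] at huv
      rw [← Finset.mul_prod_erase T (fun t => u - t) hxT,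
        ← Finset.mul_prod_erase T (fun t => v - t) hxT] at huv
      have h3 := mul_nonneg h1 h2.le
      nlinarith
    · have hch : ¬ SignChangeAt f x := fun h => hxT ((hT x).mpr ⟨hx, h⟩)
      unfold SignChangeAt at hch
      push Not at hch
      obtain ⟨δ1, hδ1, hb1⟩ := hch
      obtain ⟨δ2, hδ2, hb2⟩ := hPloc T x hxT
      obtain ⟨u, v, hu, hv, huv⟩ := hs (min δ1 δ2) (lt_min hδ1 hδ2)
      have h1 := hb1 u v (lt_of_lt_of_le hu (min_le_left _ _)) (lt_of_lt_of_le hv (min_le_left _ _))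
      have h2 := hb2 u v (lt_of_lt_of_le hu (min_le_right _ _))
        (lt_of_lt_of_le hv (min_le_right _ _))
      have h3 := mul_nonneg h1 h2.le
      nlinarith

/-- Real symmetric functions. -/
def RSym (F : ℂ → ℂ) : Prop := ∀ z, F ((starRingEnd ℂ) z) = (starRingEnd ℂ) (F z)

lemma RSym.ofReal {F : ℂ → ℂ} (h : RSym F) (x : ℝ) : F (x : ℂ) = ((F (x : ℂ)).re : ℂ) := by
  have := h (x : ℂ)
  rw [Complex.conj_ofReal] at this
  exact ((Complex.conj_eq_iff_re).mp this.symm).symm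

lemma RSym.deriv {F : ℂ → ℂ} (h : RSym F) : RSym (deriv F) := by
  intro z
  have h1 : (starRingEnd ℂ) ∘ F ∘ (starRingEnd ℂ) = F := by
    funext w
    simp [h w]
  have h2 := deriv_conj_conj (f := F)
  rw [h1] at h2
  have h3 := congrFun h2 ((starRingEnd ℂ) z)
  simpa using h3

lemma RSym.iteratedDeriv {F : ℂ → ℂ} (h : RSym F) (i : ℕ) : RSym (iteratedDeriv i F) := by
  induction i with
  | zero => simpa using h
  | succ n ih =>
    rw [iteratedDeriv_succ]
    exact ih.deriv

lemma conj_notMem_cpx {s : Set ℝ} {z : ℂ} (hz : z ∉ cpx s) : (starRingEnd ℂ) z ∉ cpx s := by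
  rintro ⟨t, ht, h⟩
  apply hz
  refine ⟨t, ht, ?_⟩
  have := congrArg (starRingEnd ℂ) h
  simpa using this

/-- The basic step: zeros of a Cauchy-type transform outside the interval produce sign changes of
the density in the interval. -/
lemma step {μ : Measure ℝ} [IsFiniteMeasure μ] {a b : ℝ}
    (hhull : convexHull ℝ (msupport μ) = Set.Icc a b) (hinf : (msupport μ).Infinite)
    {e : ℝ} (he : e ≠ 0) {g F : ℂ → ℂ} (hgs : RSym g) (hFs : RSym F)
    (hgc : ContinuousOn (fun t : ℝ => g (t : ℂ)) (Set.Icc a b))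
    (hgfin : {x ∈ Set.Icc a b | g (x : ℂ) = 0}.Finite)
    {d r : ℕ} {q : Polynomial ℂ} (hq : q.degree < (d : WithBot ℕ))
    (hF : ∀ z, z ∉ cpx (Set.Icc a b) →
      F z = q.eval z + (e : ℂ) * ∫ t, g (t : ℂ) / (z - (t : ℂ)) ∂μ)
    (ho : Orth μ r (fun t => g (t : ℂ))) (hdr : d = 0 ∨ r = 0)
    (S : Finset ℂ) (ord : ℂ → ℕ) (hS : ↑S ⊆ (cpx (Set.Icc a b))ᶜ)
    (hz : ∀ x ∈ S, ∀ i < ord x, iteratedDeriv i F x = 0) (hd : d ≤ ∑ x ∈ S, ord x) :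
    ∃ T : Finset ℝ, ↑T ⊆ Set.Ioo a b ∧ r + ∑ x ∈ S, ord x ≤ T.card + d ∧
      ∀ x ∈ T, SignChangeAt (fun t : ℝ => (g (t : ℂ)).re) x := by
  classical
  have hK := null_Icc hhull
  have hsub : msupport μ ⊆ Set.Icc a b := by
    rw [← hhull]
    exact subset_convexHull ℝ _
  set f : ℝ → ℝ := fun t => (g (t : ℂ)).re with hf
  have hfg : ∀ t : ℝ, g (t : ℂ) = (f t : ℂ) := fun t => hgs.ofReal t
  have hfc : ContinuousOn f (Set.Icc a b) := Complex.continuous_re.comp_continuousOn hgc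
  have hffin : {x ∈ Set.Icc a b | f x = 0}.Finite := by
    refine hgfin.subset ?_
    rintro x ⟨hx, h0⟩
    exact ⟨hx, by rw [hfg, h0, Complex.ofReal_zero]⟩
  have hTfin : {x | x ∈ Set.Ioo a b ∧ SignChangeAt f x}.Finite := by
    refine hffin.subset ?_
    rintro x ⟨hx, hs⟩
    exact ⟨Set.Ioo_subset_Icc_self hx,
      zero_of_signChange (hfc.continuousAt (Icc_mem_nhds hx.1 hx.2)) hs⟩
  set T := hTfin.toFinset with hTdef
  have hT : ∀ x, x ∈ T ↔ x ∈ Set.Ioo a b ∧ SignChangeAt f x := by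
    intro x
    simp [hTdef]
  refine ⟨T, fun x hx => ((hT x).mp hx).1, ?_, fun x hx => ((hT x).mp hx).2⟩
  by_contra hcon
  push Not at hcon
  -- symmetrize
  set c : ℂ → ℂ := fun z => (starRingEnd ℂ) z with hc
  set oS : ℂ → ℕ := fun x => if x ∈ S then ord x else 0 with hoS
  set S' : Finset ℂ := S ∪ S.image c with hS'
  set ord' : ℂ → ℕ := fun x => max (oS x) (oS (c x)) with hord'
  have hS'K : ∀ x ∈ S', x ∉ cpx (Set.Icc a b) := by
    intro x hx
    rcases Finset.mem_union.mp hx with h | h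
    · exact hS h
    · obtain ⟨y, hy, rfl⟩ := Finset.mem_image.mp h
      exact conj_notMem_cpx (hS hy)
  have hsum : ∑ x ∈ S, ord x ≤ ∑ x ∈ S', ord' x := by
    calc ∑ x ∈ S, ord x ≤ ∑ x ∈ S, ord' x := by
          apply Finset.sum_le_sum
          intro x hx
          have : ord x = oS x := by simp [hoS, hx]
          rw [this]
          exact le_max_left _ _
      _ ≤ ∑ x ∈ S', ord' x :=
          Finset.sum_le_sum_of_subset Finset.subset_union_left
  have hFan : ∀ z, z ∉ cpx (Set.Icc a b) → AnalyticAt ℂ F z := by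
    intro z hz
    refine ct_analytic hK (h := fun t => (e : ℂ) * g (t : ℂ)) (continuousOn_const.mul hgc) q ?_ hz
    intro w hw
    rw [hF w hw, ← integral_const_mul]
    simp_rw [mul_div_assoc]
  have hz' : ∀ x ∈ S', (ord' x : ℕ∞) ≤ analyticOrderAt F x := by
    intro x hx
    rw [natCast_le_analyticOrderAt_iff_iteratedDeriv_eq_zero (hFan x (hS'K x hx))]
    have hb : ∀ y, ∀ i < oS y, iteratedDeriv i F y = 0 := by
      intro y i hi
      by_cases hy : y ∈ S
      · simp only [hoS, hy, if_true] at hi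
        exact hz y hy i hi
      · simp [hoS, hy] at hi
    intro i hi
    rcases lt_max_iff.mp hi with h | h
    · exact hb x i h
    · have h1 := hb (c x) i h
      rw [hc] at h1
      simp only [] at h1
      rw [hFs.iteratedDeriv i x] at h1
      simpa using h1
  have horth := div_zeros hK S' hS'K _ ord' rfl d r q (fun t => (e : ℂ) * g (t : ℂ)) F
    (continuousOn_const.mul hgc) hq
    (by
      intro w hw
      rw [hF w hw, ← integral_const_mul]
      simp_rw [mul_div_assoc]) hz'
    (by
      intro p hp
      have := ho p hp
      have h2 : ∀ t : ℝ, p.eval (t : ℂ) * ((e : ℂ) * g (t : ℂ)) =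
        (e : ℂ) * (p.eval (t : ℂ) * g (t : ℂ)) := fun t => by ring
      simp_rw [h2]
      rw [integral_const_mul, this, mul_zero]) hdr (hd.trans hsum)
  set w : ℂ → ℂ := fun z => ∏ s ∈ S', (z - s) ^ ord' s with hw
  have hcinv : ∀ x, c (c x) = x := fun x => by simp [hc]
  have hws : RSym w := by
    intro z
    simp only [hw]
    rw [map_prod]
    refine Finset.prod_bij' (fun x _ => c x) (fun x _ => c x) ?_ ?_ ?_ ?_ ?_
    · intro x hx
      rcases Finset.mem_union.mp hx with h | h
      · exact Finset.mem_union_right _ (Finset.mem_image_of_mem c h)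
      · obtain ⟨y, hy, rfl⟩ := Finset.mem_image.mp h
        rw [hcinv]
        exact Finset.mem_union_left _ hy
    · intro x hx
      rcases Finset.mem_union.mp hx with h | h
      · exact Finset.mem_union_right _ (Finset.mem_image_of_mem c h)
      · obtain ⟨y, hy, rfl⟩ := Finset.mem_image.mp h
        rw [hcinv]
        exact Finset.mem_union_left _ hy
    · intro x _
      exact hcinv x
    · intro x _
      exact hcinv x
    · intro x _
      have : ord' (c x) = ord' x := by
        simp only [hord']
        rw [hcinv, max_comm]
      rw [this, map_pow, map_sub]
      simp [hc]
  set W : ℝ → ℝ := fun t => (w (t : ℂ)).re with hW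
  have hwW : ∀ t : ℝ, w (t : ℂ) = (W t : ℂ) := fun t => hws.ofReal t
  have hWc : Continuous W := by
    have : Continuous w := by
      simp only [hw]
      fun_prop
    exact Complex.continuous_re.comp (this.comp Complex.continuous_ofReal)
  have hWne : ∀ t ∈ Set.Icc a b, W t ≠ 0 := by
    intro t ht h0
    have : w (t : ℂ) = 0 := by rw [hwW, h0, Complex.ofReal_zero]
    simp only [hw] at this
    obtain ⟨s, hs, hs0⟩ := Finset.prod_eq_zero_iff.mp this
    exact sub_ne_of_notMem' (hS'K s hs) ht (by by_contra hne; exact pow_ne_zero _ hne hs0)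
  set p : Polynomial ℂ := ∏ t ∈ T, (X - C (t : ℂ)) with hp
  have hpdeg : p.degree < ((r + ∑ x ∈ S', ord' x - d : ℕ) : WithBot ℕ) := by
    rw [hp, Polynomial.degree_prod]
    simp only [Polynomial.degree_X_sub_C, Finset.sum_const, nsmul_eq_mul, mul_one]
    exact_mod_cast (by omega : T.card < r + ∑ x ∈ S', ord' x - d)
  set P : ℝ → ℝ := fun x => ∏ t ∈ T, (x - t) with hP
  have hpP : ∀ x : ℝ, p.eval (x : ℂ) = (P x : ℂ) := by
    intro x
    simp [hp, hP, Polynomial.eval_prod]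
  have hIint : ∫ t, f t * P t / W t ∂μ = 0 := by
    have h1 := horth p hpdeg
    have h2 : ∀ t : ℝ, p.eval (t : ℂ) * ((e : ℂ) * g (t : ℂ) / ∏ s ∈ S', ((t : ℂ) - s) ^ ord' s) =
        (e : ℂ) * ((f t * P t / W t : ℝ) : ℂ) := by
      intro t
      have h3 : ∏ s ∈ S', ((t : ℂ) - s) ^ ord' s = (W t : ℂ) := hwW t
      rw [h3, hpP, hfg]
      push_cast
      ring
    simp_rw [h2] at h1
    have h4 : ∫ t, ((f t * P t / W t : ℝ) : ℂ) ∂μ = ((∫ t, f t * P t / W t ∂μ : ℝ) : ℂ) :=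
      integral_ofReal
    rw [integral_const_mul, h4] at h1
    rcases mul_eq_zero.mp h1 with h3 | h3
    · exact absurd (Complex.ofReal_eq_zero.mp h3) he
    · exact Complex.ofReal_eq_zero.mp h3
  have hkc : ContinuousOn (fun t => f t * P t / W t) (Set.Icc a b) := by
    refine (hfc.mul ?_).div hWc.continuousOn hWne
    simp only [hP]
    fun_prop
  have hWsign : (∀ x ∈ Set.Icc a b, 0 ≤ W x) ∨ (∀ x ∈ Set.Icc a b, W x ≤ 0) := by
    by_contra hcon2
    push Not at hcon2
    obtain ⟨⟨v, hvI, hv⟩, ⟨u, huI, hu⟩⟩ := hcon2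
    have hsubI : Set.uIcc u v ⊆ Set.Icc a b := Set.uIcc_subset_Icc huI hvI
    have := same_sign (f := W) (p := u) (q := v) hWc.continuousOn (fun x hx => hWne x (hsubI hx))
    nlinarith
  have hfP := const_sign_mul_prod hfc hffin T hT
  have hzero : ∀ x ∈ msupport μ, f x * P x / W x = 0 := by
    have hneg : (∀ x ∈ Set.Icc a b, f x * P x / W x ≤ 0) →
        ∀ x ∈ msupport μ, f x * P x / W x = 0 := by
      intro hle x hx
      have := zero_on_support hK hsub hkc.neg (fun x hx => by simpa using hle x hx)
        (by simp only [Pi.neg_apply]; rw [integral_neg, hIint, neg_zero]) x hx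
      simpa using this
    rcases hfP with h1 | h1 <;> rcases hWsign with h2 | h2
    · exact zero_on_support hK hsub hkc (fun x hx => div_nonneg (h1 x hx) (h2 x hx)) hIint
    · exact hneg (fun x hx => div_nonpos_of_nonneg_of_nonpos (h1 x hx) (h2 x hx))
    · exact hneg (fun x hx => div_nonpos_of_nonpos_of_nonneg (h1 x hx) (h2 x hx))
    · exact zero_on_support hK hsub hkc (fun x hx => div_nonneg_of_nonpos (h1 x hx) (h2 x hx)) hIint
  apply hinf
  refine (hffin.union T.finite_toSet).subset ?_
  intro x hx
  have h0 := hzero x hx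
  rcases div_eq_zero_iff.mp h0 with h1 | h1
  · rcases mul_eq_zero.mp h1 with h2 | h2
    · exact Or.inl ⟨hsub hx, h2⟩
    · right
      obtain ⟨t, ht, ht0⟩ := Finset.prod_eq_zero_iff.mp h2
      rw [sub_eq_zero.mp ht0]
      exact ht
  · exact absurd h1 (hWne x (hsub hx))

lemma rsym_ct {g : ℂ → ℂ} (hg : RSym g) (μ : Measure ℝ) (e : ℝ) :
    RSym (fun z => (e : ℂ) * ∫ t, g (t : ℂ) / (z - (t : ℂ)) ∂μ) := by
  intro z
  simp only []
  rw [map_mul, Complex.conj_ofReal, ← integral_conj]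
  congr 2
  funext t
  rw [map_div₀, map_sub, Complex.conj_ofReal, ← hg (t : ℂ), Complex.conj_ofReal]

lemma wt_rec (μ : ℕ → Measure ℝ) (e : ℕ → ℝ) {j k : ℕ} (hjk : j < k) (z : ℂ) :
    wt μ e j k z = (e (j + 1) : ℂ) * ∫ t, wt μ e (j + 1) k (t : ℂ) / (z - (t : ℂ)) ∂(μ (j + 1)) := by
  obtain ⟨g, rfl⟩ : ∃ g, k = j + 1 + g := ⟨k - (j + 1), by omega⟩
  cases g with
  | zero => simp [wt, nikhat]
  | succ g =>
    have h1 : j + 1 + (g + 1) - (j + 1) = g + 1 := by omega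
    have h2 : j + 1 + (g + 1) - (j + 1 + 1) = g := by omega
    have h3 : j + 1 < j + 1 + (g + 1) := by omega
    simp only [wt, hjk, h3, if_true, h1, h2, nikhat]

lemma wt_self (μ : ℕ → Measure ℝ) (e : ℕ → ℝ) (j : ℕ) (z : ℂ) : wt μ e j j z = 1 := by
  simp [wt]

lemma rsym_wt (μ : ℕ → Measure ℝ) (e : ℕ → ℝ) : ∀ g j, RSym (wt μ e j (j + g)) := by
  intro g
  induction g with
  | zero =>
    intro j z
    simp [wt_self]
  | succ g ih =>
    intro j
    have h : j + (g + 1) = j + 1 + g := by omega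
    rw [h]
    have e1 : wt μ e j (j + 1 + g) = fun z => (e (j + 1) : ℂ) *
        ∫ t, wt μ e (j + 1) (j + 1 + g) (t : ℂ) / (z - (t : ℂ)) ∂(μ (j + 1)) := by
      funext z
      exact wt_rec μ e (by omega) z
    rw [e1]
    exact rsym_ct (ih (j + 1)) _ _

lemma rsym_aeval (p : Polynomial ℝ) : RSym (fun z => Polynomial.aeval z p) := by
  intro z
  exact Polynomial.aeval_conj p z

lemma rsym_linForm (μ : ℕ → Measure ℝ) (e : ℕ → ℝ) (m j : ℕ) (A : ℕ → Polynomial ℝ) :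
    RSym (linForm μ e m j A) := by
  intro z
  simp only [linForm]
  rw [map_sum]
  apply Finset.sum_congr rfl
  intro k hk
  have hk' := Finset.mem_Icc.mp hk
  obtain ⟨g, rfl⟩ : ∃ g, k = j + g := ⟨k - j, by omega⟩
  have h1 := rsym_aeval (A (j + g)) z
  simp only [] at h1
  rw [map_mul, rsym_wt μ e g j z, h1]

lemma rsym_linFormNeg (μ : ℕ → Measure ℝ) (e : ℕ → ℝ) {F : ℂ → ℂ} (hF : RSym F) :
    ∀ j, RSym (linFormNeg μ e F j) := by
  intro j
  induction j with
  | zero => exact hF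
  | succ j ih => exact rsym_ct ih _ _

lemma ofReal_notMem {a b c d : ℝ} (h : Set.Icc a b ∩ Set.Icc c d = ∅) {x : ℝ}
    (hx : x ∈ Set.Icc a b) : (x : ℂ) ∉ cpx (Set.Icc c d) := by
  rintro ⟨t, ht, hxt⟩
  have : t = x := Complex.ofReal_injective hxt
  rw [this] at ht
  have h2 : x ∈ Set.Icc a b ∩ Set.Icc c d := ⟨hx, ht⟩
  rw [h] at h2
  exact h2

lemma ct_analytic' {μ : Measure ℝ} [IsFiniteMeasure μ] {a b : ℝ} (hK : μ (Set.Icc a b)ᶜ = 0)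
    {h : ℝ → ℂ} (hh : ContinuousOn h (Set.Icc a b)) (e : ℝ)
    {z : ℂ} (hz : z ∉ cpx (Set.Icc a b)) :
    AnalyticAt ℂ (fun z => (e : ℂ) * ∫ t, h t / (z - (t : ℂ)) ∂μ) z := by
  refine ct_analytic hK (h := fun t => (e : ℂ) * h t) (continuousOn_const.mul hh) 0 ?_ hz
  intro w hw
  rw [← integral_const_mul]
  simp_rw [mul_div_assoc]
  simp

lemma ct_contOn {μ : Measure ℝ} [IsFiniteMeasure μ] {a b c d : ℝ} (hK : μ (Set.Icc a b)ᶜ = 0)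
    {h : ℝ → ℂ} (hh : ContinuousOn h (Set.Icc a b)) (e : ℝ)
    (hd : Set.Icc c d ∩ Set.Icc a b = ∅) :
    ContinuousOn (fun x : ℝ => (e : ℂ) * ∫ t, h t / ((x : ℂ) - (t : ℂ)) ∂μ) (Set.Icc c d) := by
  intro x hx
  have h1 := (ct_analytic' hK hh e (ofReal_notMem hd hx)).continuousAt
  have h2 : ContinuousAt (fun x : ℝ => (x : ℂ)) x := Complex.continuous_ofReal.continuousAt
  exact (ContinuousAt.comp (f := fun x : ℝ => (x : ℂ)) h1 h2).continuousWithinAt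

lemma NikSys.null {m : ℕ} (S : NikSys m) {j : ℕ} (hj : j ≤ m) :
    S.μ j (Set.Icc (S.a j) (S.b j))ᶜ = 0 := null_Icc (S.hull j hj)

lemma NikSys.e_ne {m : ℕ} (S : NikSys m) (j : ℕ) : S.e j ≠ 0 := by
  rcases S.sgn j with h | h <;> rw [h] <;> norm_num

lemma wt_cont {m : ℕ} (S : NikSys m) : ∀ g j, j + g ≤ m →
    ContinuousOn (fun t : ℝ => wt S.μ S.e j (j + g) (t : ℂ)) (Set.Icc (S.a j) (S.b j)) := by
  intro g
  induction g with
  | zero =>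
    intro j _
    simp only [Nat.add_zero, wt_self]
    exact continuousOn_const
  | succ g ih =>
    intro j hj
    have h : j + (g + 1) = j + 1 + g := by omega
    rw [h]
    have := S.fin (j + 1)
    have h1 := ct_contOn (S.null (show j + 1 ≤ m by omega)) (ih (j + 1) (by omega)) (S.e (j + 1))
      (S.disj j (by omega))
    refine h1.congr (fun t _ => ?_)
    exact wt_rec S.μ S.e (by omega) (t : ℂ)

lemma wt_cont' {m : ℕ} (S : NikSys m) {j k : ℕ} (hjk : j ≤ k) (hk : k ≤ m) :
    ContinuousOn (fun t : ℝ => wt S.μ S.e j k (t : ℂ)) (Set.Icc (S.a j) (S.b j)) := by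
  obtain ⟨g, rfl⟩ : ∃ g, k = j + g := ⟨k - j, by omega⟩
  exact wt_cont S g j hk

lemma aeval_eq_eval (p : Polynomial ℝ) (z : ℂ) :
    Polynomial.aeval z p = (p.map (algebraMap ℝ ℂ)).eval z := by
  rw [Polynomial.eval_map_algebraMap]

lemma linForm_cont {m : ℕ} (S : NikSys m) (j : ℕ) (p : ℕ → Polynomial ℝ) :
    ContinuousOn (fun t : ℝ => linForm S.μ S.e m j p (t : ℂ)) (Set.Icc (S.a j) (S.b j)) := by
  simp only [linForm]
  apply continuousOn_finsetSum
  intro k hk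
  have hk' := Finset.mem_Icc.mp hk
  refine ContinuousOn.mul ?_ (wt_cont' S hk'.1 hk'.2)
  simp_rw [aeval_eq_eval]
  fun_prop

lemma decr_le {m : ℕ} {n : ℕ → ℕ} (h : Decr m n) {j k : ℕ} (hjk : j ≤ k) (hk : k ≤ m) :
    n k ≤ n j := by
  induction k with
  | zero =>
    obtain rfl : j = 0 := by omega
    exact le_rfl
  | succ k ih =>
    rcases Nat.lt_or_ge j (k + 1) with h1 | h1
    · exact (h k (by omega)).trans (ih (by omega) (by omega))
    · obtain rfl : j = k + 1 := by omega
      exact le_rfl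

lemma linForm_decomp {m : ℕ} (S : NikSys m) {n : ℕ → ℕ} (hn : Decr m n) (p : ℕ → Polynomial ℝ)
    (hp : ∀ k ≤ m, (p k).degree < (n k : WithBot ℕ)) {j : ℕ} (hj : j < m) :
    ∃ q : Polynomial ℂ, q.degree < (n j : WithBot ℕ) ∧
      ∀ z, z ∉ cpx (Set.Icc (S.a (j + 1)) (S.b (j + 1))) →
        linForm S.μ S.e m j p z = q.eval z + (S.e (j + 1) : ℂ) *
          ∫ t, linForm S.μ S.e m (j + 1) p (t : ℂ) / (z - (t : ℂ)) ∂(S.μ (j + 1)) := by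
  have := S.fin (j + 1)
  have hK := S.null (show j + 1 ≤ m by omega)
  have hdeg : ∀ k ≤ m, ((p k).map (algebraMap ℝ ℂ)).degree < (n k : WithBot ℕ) := fun k hk =>
    lt_of_le_of_lt Polynomial.degree_map_le (hp k hk)
  have hex : ∀ k, ∃ q : Polynomial ℂ, (j + 1 ≤ k → k ≤ m → (q.degree < (n j : WithBot ℕ) ∧
      ∀ z, z ∉ cpx (Set.Icc (S.a (j + 1)) (S.b (j + 1))) →
        Polynomial.aeval z (p k) * wt S.μ S.e j k z = (S.e (j + 1) : ℂ) * q.eval z +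
          (S.e (j + 1) : ℂ) * ∫ t, (Polynomial.aeval (t : ℂ) (p k) * wt S.μ S.e (j + 1) k (t : ℂ)) /
            (z - (t : ℂ)) ∂(S.μ (j + 1)))) := by
    intro k
    by_cases hk : j + 1 ≤ k ∧ k ≤ m
    · obtain ⟨q, hq, hqz⟩ := poly_mul_ct hK (wt_cont' S hk.1 hk.2) (n k) _ (hdeg k hk.2)
      refine ⟨q, fun _ _ => ⟨lt_of_lt_of_le hq ?_, ?_⟩⟩
      · exact_mod_cast decr_le hn (show j ≤ k by omega) hk.2
      · intro z hz
        have h1 := hqz z hz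
        rw [wt_rec S.μ S.e (show j < k by omega) z]
        simp_rw [aeval_eq_eval]
        rw [← mul_add, ← h1]
        ring
    · exact ⟨0, fun h1 h2 => absurd ⟨h1, h2⟩ hk⟩
  choose q hq using hex
  refine ⟨(p j).map (algebraMap ℝ ℂ) + ∑ k ∈ Finset.Icc (j + 1) m, C (S.e (j + 1) : ℂ) * q k,
    ?_, ?_⟩
  · rw [← Polynomial.mem_degreeLT]
    apply Submodule.add_mem
    · rw [Polynomial.mem_degreeLT]
      exact hdeg j hj.le
    · apply Submodule.sum_mem
      intro k hk
      have hk' := Finset.mem_Icc.mp hk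
      rw [← Polynomial.smul_eq_C_mul]
      apply Submodule.smul_mem
      rw [Polynomial.mem_degreeLT]
      exact (hq k hk'.1 hk'.2).1
  · intro z hz
    have hIint : ∫ t, linForm S.μ S.e m (j + 1) p (t : ℂ) / (z - (t : ℂ)) ∂(S.μ (j + 1)) =
        ∑ k ∈ Finset.Icc (j + 1) m,
          ∫ t, (Polynomial.aeval (t : ℂ) (p k) * wt S.μ S.e (j + 1) k (t : ℂ)) /
            (z - (t : ℂ)) ∂(S.μ (j + 1)) := by
      rw [← integral_finsetSum]
      · simp only [linForm, Finset.sum_div]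
      · intro k hk
        have hk' := Finset.mem_Icc.mp hk
        refine integ_of_cont hK (cont_div hz (ContinuousOn.mul ?_ (wt_cont' S hk'.1 hk'.2)))
        simp_rw [aeval_eq_eval]
        fun_prop
    rw [hIint, Finset.mul_sum, Polynomial.eval_add, Polynomial.eval_finsetSum, add_assoc,
      ← Finset.sum_add_distrib]
    simp only [linForm]
    have hI : Finset.Icc j m = insert j (Finset.Icc (j + 1) m) := by
      ext x
      simp only [Finset.mem_insert, Finset.mem_Icc]
      omega
    rw [hI, Finset.sum_insert (by simp), wt_self, mul_one, aeval_eq_eval]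
    congr 1
    apply Finset.sum_congr rfl
    intro k hk
    have hk' := Finset.mem_Icc.mp hk
    rw [(hq k hk'.1 hk'.2).2 z hz]
    simp

lemma poly_zeros {p : Polynomial ℝ} (hp : p ≠ 0) {n : ℕ} (hn : p.degree < (n : WithBot ℕ))
    (D : Set ℂ) : CZerosLT (fun z => Polynomial.aeval z p) D n := by
  classical
  intro S ord hS hz
  set P := p.map (algebraMap ℝ ℂ) with hP
  have hP0 : P ≠ 0 := by
    rw [hP]
    exact (Polynomial.map_ne_zero_iff (algebraMap ℝ ℂ).injective).mpr hp
  have hfun : (fun z : ℂ => Polynomial.aeval z p) = fun z => P.eval z := by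
    funext z
    exact aeval_eq_eval p z
  have hder : ∀ i, iteratedDeriv i (fun z => P.eval z) = fun z => (derivative^[i] P).eval z := by
    intro i
    induction i with
    | zero => simp
    | succ i ih =>
      rw [iteratedDeriv_succ, ih, Function.iterate_succ_apply']
      funext z
      exact Polynomial.deriv _
  rw [hfun] at hz
  have hroot : ∀ x ∈ S, ord x ≤ P.roots.count x := by
    intro x hx
    rw [Polynomial.count_roots]
    rcases Nat.eq_zero_or_pos (ord x) with h0 | h0
    · omega
    · have : ord x - 1 < P.rootMultiplicity x := by
        rw [Polynomial.lt_rootMultiplicity_iff_isRoot_iterate_derivative hP0]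
        intro i hi
        have h1 := hz x hx i (by omega)
        rw [hder] at h1
        exact h1
      omega
  calc ∑ x ∈ S, ord x ≤ ∑ x ∈ S, P.roots.count x := Finset.sum_le_sum hroot
    _ ≤ ∑ x ∈ S ∪ P.roots.toFinset, P.roots.count x :=
        Finset.sum_le_sum_of_subset Finset.subset_union_left
    _ = P.roots.card := Multiset.sum_count_eq_card (fun x hx =>
        Finset.mem_union_right _ (Multiset.mem_toFinset.mpr hx))
    _ ≤ P.natDegree := Polynomial.card_roots' P
    _ < n := by
        rw [Polynomial.natDegree_lt_iff_degree_lt hP0]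
        exact lt_of_le_of_lt Polynomial.degree_map_le hn

lemma tailSum_succ {m : ℕ} (n : ℕ → ℕ) {j : ℕ} (hj : j ≤ m) :
    tailSum m n j = n j + tailSum m n (j + 1) := by
  have hI : Finset.Icc j m = insert j (Finset.Icc (j + 1) m) := by
    ext x
    simp only [Finset.mem_insert, Finset.mem_Icc]
    omega
  rw [tailSum, hI, Finset.sum_insert (by simp), tailSum]

lemma zeros_fin {g : ℂ → ℂ} {D : Set ℂ} {N : ℕ} (h : CZerosLE g D N) {a b : ℝ}
    (hD : ∀ x ∈ Set.Icc a b, (x : ℂ) ∈ D) : {x ∈ Set.Icc a b | g (x : ℂ) = 0}.Finite := by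
  classical
  by_contra hinf
  obtain ⟨T, hT, hc⟩ := Set.Infinite.exists_subset_card_eq hinf (N + 1)
  have h1 := h (T.image (fun x : ℝ => (x : ℂ))) (fun _ => 1) (by
    intro z hz
    rw [Finset.coe_image] at hz
    obtain ⟨x, hx, rfl⟩ := hz
    exact hD x (hT hx).1) (by
    intro z hz i hi
    obtain ⟨x, hx, rfl⟩ := Finset.mem_image.mp hz
    obtain rfl : i = 0 := by omega
    rw [iteratedDeriv_zero]
    exact (hT hx).2)
  rw [Finset.sum_const, Finset.card_image_of_injective _ Complex.ofReal_injective, hc] at h1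
  simp at h1

lemma signChange_zero {g : ℂ → ℂ} (hg : RSym g) {a b : ℝ}
    (hc : ContinuousOn (fun t : ℝ => g (t : ℂ)) (Set.Icc a b)) {x : ℝ} (hx : x ∈ Set.Ioo a b)
    (hs : SignChangeAt (fun t : ℝ => (g (t : ℂ)).re) x) : g (x : ℂ) = 0 := by
  have h1 := zero_of_signChange (f := fun t : ℝ => (g (t : ℂ)).re)
    (Complex.continuous_re.continuousAt.comp (hc.continuousAt (Icc_mem_nhds hx.1 hx.2))) hs
  rw [hg.ofReal x]
  simpa using h1

lemma card_le_of_zeros {g : ℂ → ℂ} (hg : RSym g) {D : Set ℂ} {N : ℕ} (h : CZerosLE g D N) {a b : ℝ}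
    (hD : ∀ x ∈ Set.Icc a b, (x : ℂ) ∈ D)
    (hc : ContinuousOn (fun t : ℝ => g (t : ℂ)) (Set.Icc a b)) {T : Finset ℝ}
    (hT : ↑T ⊆ Set.Ioo a b) (hs : ∀ x ∈ T, SignChangeAt (fun t : ℝ => (g (t : ℂ)).re) x) :
    T.card ≤ N := by
  classical
  have h1 := h (T.image (fun x : ℝ => (x : ℂ))) (fun _ => 1) (by
    intro z hz
    rw [Finset.coe_image] at hz
    obtain ⟨x, hx, rfl⟩ := hz
    exact hD x (Set.Ioo_subset_Icc_self (hT hx))) (by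
    intro z hz i hi
    obtain ⟨x, hx, rfl⟩ := Finset.mem_image.mp hz
    obtain rfl : i = 0 := by omega
    rw [iteratedDeriv_zero]
    exact signChange_zero hg hc (hT hx) (hs x hx))
  rw [Finset.sum_const, Finset.card_image_of_injective _ Complex.ofReal_injective] at h1
  simpa using h1

lemma czerosLE_of_LT {g : ℂ → ℂ} {D : Set ℂ} {N : ℕ} (h : CZerosLT g D N) :
    ∃ M, N = M + 1 ∧ CZerosLE g D M := by
  have h0 := h ∅ (fun _ => 0) (by simp) (by simp)
  refine ⟨N - 1, by omega, ?_⟩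
  intro S ord hS hz
  have := h S ord hS hz
  omega

/-- Domain of the linear forms. -/
def Dom (m : ℕ) (S : NikSys m) (j : ℕ) : Set ℂ :=
  if j < m then (cpx (Set.Icc (S.a (j + 1)) (S.b (j + 1))))ᶜ else Set.univ

lemma mem_Dom {m : ℕ} (S : NikSys m) (j : ℕ) : ∀ x ∈ Set.Icc (S.a j) (S.b j),
    (x : ℂ) ∈ Dom m S j := by
  intro x hx
  unfold Dom
  split_ifs with h
  · exact ofReal_notMem (S.disj j h) hx
  · trivial

lemma linForm_zeros {m : ℕ} (S : NikSys m) {n : ℕ → ℕ} (hn : Decr m n) (p : ℕ → Polynomial ℝ)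
    (hp : ∀ k ≤ m, (p k).degree < (n k : WithBot ℕ)) : ∀ g j, j + g = m →
    (∃ k, j ≤ k ∧ k ≤ m ∧ p k ≠ 0) →
    CZerosLT (linForm S.μ S.e m j p) (Dom m S j) (tailSum m n j) := by
  intro g
  have hpoly : ∀ j ≤ m, (∀ k, j < k → k ≤ m → p k = 0) → p j ≠ 0 →
      CZerosLT (linForm S.μ S.e m j p) (Dom m S j) (tailSum m n j) := by
    intro j hj hk hpj
    have e1 : linForm S.μ S.e m j p = fun z => Polynomial.aeval z (p j) := by
      funext z
      rw [linForm, Finset.sum_eq_single j]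
      · rw [wt_self, mul_one]
      · intro k hk' hkj
        have := Finset.mem_Icc.mp hk'
        rw [hk k (by omega) this.2]
        simp
      · intro h
        exact absurd (Finset.mem_Icc.mpr ⟨le_rfl, hj⟩) h
    rw [e1]
    intro S' ord hS hz
    have := poly_zeros hpj (hp j hj) _ S' ord hS hz
    rw [tailSum_succ n hj]
    omega
  induction g with
  | zero =>
    intro j hj hex
    obtain ⟨k, h1, h2, h3⟩ := hex
    obtain rfl : k = j := by omega
    exact hpoly k h2 (fun k' h4 h5 => by omega) h3
  | succ g ih =>
    intro j hj hex
    by_cases hall : ∀ k, j < k → k ≤ m → p k = 0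
    · apply hpoly j (by omega) hall
      obtain ⟨k, h1, h2, h3⟩ := hex
      rcases Nat.eq_or_lt_of_le h1 with h4 | h4
      · rwa [h4]
      · exact absurd (hall k h4 h2) h3
    · push Not at hall
      obtain ⟨k, h1, h2, h3⟩ := hall
      have hjm : j < m := by omega
      obtain ⟨M, hM, hLE⟩ := czerosLE_of_LT (ih (j + 1) (by omega) ⟨k, by omega, h2, h3⟩)
      obtain ⟨q, hq, hqz⟩ := linForm_decomp S hn p hp hjm
      intro S' ord hS hz
      by_contra hcon
      push Not at hcon
      rw [tailSum_succ n hjm.le] at hcon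
      have hS' : ↑S' ⊆ (cpx (Set.Icc (S.a (j + 1)) (S.b (j + 1))))ᶜ := by
        simpa [Dom, hjm] using hS
      have := S.fin (j + 1)
      have hcont := linForm_cont S (j + 1) p
      have hsym := rsym_linForm S.μ S.e m (j + 1) p
      obtain ⟨T, hT1, hT2, hT3⟩ := step (S.hull (j + 1) hjm) (S.inf (j + 1) hjm) (S.e_ne (j + 1))
        hsym (rsym_linForm S.μ S.e m j p) hcont (zeros_fin hLE (mem_Dom S (j + 1))) hq hqz
        (r := 0) (by
          intro p hp
          have : p = 0 := by
            rw [← Polynomial.degree_eq_bot]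
            exact Nat.WithBot.lt_zero_iff.mp hp
          simp [this]) (Or.inr rfl) S' ord hS' hz (by omega)
      have := card_le_of_zeros hsym hLE (mem_Dom S (j + 1)) hcont hT1 hT3
      omega

lemma neg_cont {m : ℕ} (S : NikSys m) {F : ℂ → ℂ}
    (hc : ContinuousOn (fun t : ℝ => F (t : ℂ)) (Set.Icc (S.a 0) (S.b 0))) :
    ∀ j ≤ m, ContinuousOn (fun t : ℝ => linFormNeg S.μ S.e F j (t : ℂ))
      (Set.Icc (S.a j) (S.b j)) := by
  intro j
  induction j with
  | zero => intro _; exact hc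
  | succ j ih =>
    intro hj
    have := S.fin j
    exact ct_contOn (S.null (show j ≤ m by omega)) (ih (by omega)) (S.e j)
      (by rw [Set.inter_comm]; exact S.disj j (by omega))

lemma neg_analytic {m : ℕ} (S : NikSys m) {F : ℂ → ℂ}
    (hc : ContinuousOn (fun t : ℝ => F (t : ℂ)) (Set.Icc (S.a 0) (S.b 0))) {j : ℕ} (hj : j ≤ m)
    {z : ℂ} (hz : z ∉ cpx (Set.Icc (S.a j) (S.b j))) :
    AnalyticAt ℂ (linFormNeg S.μ S.e F (j + 1)) z := by
  have := S.fin j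
  exact ct_analytic' (S.null hj) (neg_cont S hc j hj) (S.e j) hz

lemma swap_K {μ ν : Measure ℝ} [IsFiniteMeasure μ] [IsFiniteMeasure ν] {a b c d : ℝ}
    (hK : μ (Set.Icc a b)ᶜ = 0) (hL : ν (Set.Icc c d)ᶜ = 0) {f : ℝ → ℝ → ℂ}
    (hf : ContinuousOn (fun p : ℝ × ℝ => f p.1 p.2) (Set.Icc a b ×ˢ Set.Icc c d)) :
    ∫ x, ∫ y, f x y ∂ν ∂μ = ∫ y, ∫ x, f x y ∂μ ∂ν := by
  apply integral_integral_swap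
  have h1 : μ.prod ν = (μ.prod ν).restrict (Set.Icc a b ×ˢ Set.Icc c d) := by
    rw [← Measure.prod_restrict, restr_eq hK, restr_eq hL]
  have h2 : IntegrableOn (fun p : ℝ × ℝ => f p.1 p.2) (Set.Icc a b ×ˢ Set.Icc c d) (μ.prod ν) :=
    hf.integrableOn_compact (isCompact_Icc.prod isCompact_Icc)
  rw [IntegrableOn, ← h1] at h2
  exact h2

lemma orth_prop {m : ℕ} (S : NikSys m) {n : ℕ → ℕ} (hn : Decr m n) {F : ℂ → ℂ}
    (hc : ContinuousOn (fun t : ℝ => F (t : ℂ)) (Set.Icc (S.a 0) (S.b 0)))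
    (h : ∀ k ≤ m, ∀ ν < n k, ∫ x : ℝ, (x : ℂ) ^ ν * F (x : ℂ) * wt S.μ S.e 0 k (x : ℂ) ∂(S.μ 0) = 0) :
    ∀ j k, j ≤ k → k ≤ m → ∀ ν < n k,
      ∫ x : ℝ, (x : ℂ) ^ ν * linFormNeg S.μ S.e F j (x : ℂ) * wt S.μ S.e j k (x : ℂ) ∂(S.μ j) = 0 := by
  intro j
  induction j with
  | zero => intro k _ hk ν hν; exact h k hk ν hν
  | succ j ih =>
    intro k hjk hk ν hν
    have := S.fin j
    have := S.fin (j + 1)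
    have hjm : j ≤ m := by omega
    have hK := S.null hjm
    have hL := S.null (show j + 1 ≤ m by omega)
    have hg := neg_cont S hc j hjm
    have hw := wt_cont' S hjk hk
    have hdis := S.disj j (by omega)
    have horth : Orth (S.μ j) (n j) (fun t : ℝ => linFormNeg S.μ S.e F j (t : ℂ)) := by
      apply orth_of_monomials hK hg
      intro ν' hν'
      have := ih j le_rfl hjm ν' hν'
      simpa [wt_self] using this
    obtain ⟨q, hq, hqz⟩ := poly_mul_ct hL hw (ν + 1) (X ^ ν) (by
      rw [Polynomial.degree_X_pow]; exact_mod_cast Nat.lt_succ_self ν)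
    have hq0 : ∫ t : ℝ, q.eval (t : ℂ) * linFormNeg S.μ S.e F j (t : ℂ) ∂(S.μ j) = 0 := by
      apply horth q
      refine lt_of_lt_of_le hq ?_
      have := decr_le hn (show j ≤ k by omega) hk
      exact_mod_cast (by omega : ν + 1 ≤ n j)
    have hm0 := ih k (by omega) hk ν hν
    have he := S.e_ne (j + 1)
    have heC : (S.e (j + 1) : ℂ) ≠ 0 := by exact_mod_cast he
    have hsub : ∀ x ∈ Set.Icc (S.a (j + 1)) (S.b (j + 1)), ∀ t ∈ Set.Icc (S.a j) (S.b j),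
        (x : ℂ) - (t : ℂ) ≠ 0 := by
      intro x hx t ht h0
      have h1 := ofReal_notMem hdis ht
      apply h1
      refine ⟨x, hx, ?_⟩
      exact sub_eq_zero.mp h0
    -- rewrite as double integral
    have e1 : ∫ x : ℝ, (x : ℂ) ^ ν * linFormNeg S.μ S.e F (j + 1) (x : ℂ) *
          wt S.μ S.e (j + 1) k (x : ℂ) ∂(S.μ (j + 1)) =
        (S.e j : ℂ) * ∫ x : ℝ, ∫ t : ℝ, (x : ℂ) ^ ν * wt S.μ S.e (j + 1) k (x : ℂ) *
          (linFormNeg S.μ S.e F j (t : ℂ) / ((x : ℂ) - (t : ℂ))) ∂(S.μ j) ∂(S.μ (j + 1)) := by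
      rw [← integral_const_mul]
      congr 1
      funext x
      rw [integral_const_mul]
      simp only [linFormNeg]
      ring
    rw [e1, swap_K hL hK]
    · have e2 : ∫ t : ℝ, ∫ x : ℝ, (x : ℂ) ^ ν * wt S.μ S.e (j + 1) k (x : ℂ) *
          (linFormNeg S.μ S.e F j (t : ℂ) / ((x : ℂ) - (t : ℂ))) ∂(S.μ (j + 1)) ∂(S.μ j) =
          ∫ t : ℝ, (q.eval (t : ℂ) * linFormNeg S.μ S.e F j (t : ℂ) -
            (S.e (j + 1) : ℂ)⁻¹ * ((t : ℂ) ^ ν * linFormNeg S.μ S.e F j (t : ℂ) *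
              wt S.μ S.e j k (t : ℂ))) ∂(S.μ j) := by
        apply integral_congr_K hK
        intro t ht
        have h1 := hqz (t : ℂ) (ofReal_notMem hdis ht)
        rw [wt_rec S.μ S.e (show j < k by omega) (t : ℂ)]
        have h2 : ∫ x : ℝ, (x : ℂ) ^ ν * wt S.μ S.e (j + 1) k (x : ℂ) *
            (linFormNeg S.μ S.e F j (t : ℂ) / ((x : ℂ) - (t : ℂ))) ∂(S.μ (j + 1)) =
            - linFormNeg S.μ S.e F j (t : ℂ) * ∫ x : ℝ, ((X ^ ν : ℂ[X]).eval (x : ℂ) *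
              wt S.μ S.e (j + 1) k (x : ℂ)) / ((t : ℂ) - (x : ℂ)) ∂(S.μ (j + 1)) := by
          rw [← integral_const_mul]
          congr 1
          funext x
          have h3 : (t : ℂ) - (x : ℂ) = -((x : ℂ) - (t : ℂ)) := by ring
          rw [h3, div_neg, Polynomial.eval_pow, Polynomial.eval_X]
          ring
        rw [h2]
        rw [Polynomial.eval_pow, Polynomial.eval_X] at h1
        have h4 := eq_sub_of_add_eq' h1.symm
        rw [h4]
        field_simp
        ring
      rw [e2, integral_sub, integral_const_mul, hq0, hm0]
      · simp
      · exact integ_of_cont hK (ContinuousOn.mul (by fun_prop) hg)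
      · apply Integrable.const_mul
        exact integ_of_cont hK (ContinuousOn.mul (ContinuousOn.mul (by fun_prop) hg)
          (wt_cont' S (by omega) hk))
    · have c1 : ContinuousOn (fun p : ℝ × ℝ => wt S.μ S.e (j + 1) k (p.1 : ℂ))
          (Set.Icc (S.a (j + 1)) (S.b (j + 1)) ×ˢ Set.Icc (S.a j) (S.b j)) :=
        hw.comp continuousOn_fst (fun p hp => hp.1)
      have c2 : ContinuousOn (fun p : ℝ × ℝ => linFormNeg S.μ S.e F j (p.2 : ℂ))
          (Set.Icc (S.a (j + 1)) (S.b (j + 1)) ×ˢ Set.Icc (S.a j) (S.b j)) :=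
        hg.comp continuousOn_snd (fun p hp => hp.2)
      refine ContinuousOn.mul (ContinuousOn.mul (by fun_prop) c1) (ContinuousOn.div c2 (by fun_prop) ?_)
      intro p hp
      exact hsub p.1 hp.1 p.2 hp.2

/-- The full orthogonality hypothesis. -/
def FullOrth {m : ℕ} (S : NikSys m) (n : ℕ → ℕ) (F : ℂ → ℂ) : Prop :=
  ∀ k ≤ m, ∀ ν < n k, ∫ x : ℝ, (x : ℂ) ^ ν * F (x : ℂ) * wt S.μ S.e 0 k (x : ℂ) ∂(S.μ 0) = 0

lemma neg_orth {m : ℕ} (S : NikSys m) {n : ℕ → ℕ} (hn : Decr m n) {F : ℂ → ℂ}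
    (hc : ContinuousOn (fun t : ℝ => F (t : ℂ)) (Set.Icc (S.a 0) (S.b 0)))
    (h : FullOrth S n F) {j : ℕ} (hj : j ≤ m) :
    Orth (S.μ j) (n j) (fun t : ℝ => linFormNeg S.μ S.e F j (t : ℂ)) := by
  have := S.fin j
  apply orth_of_monomials (S.null hj) (neg_cont S hc j hj)
  intro ν hν
  have := orth_prop S hn hc h j j le_rfl hj ν hν
  simpa [wt_self] using this

lemma neg_step {m : ℕ} (S : NikSys m) {n : ℕ → ℕ} (hn : Decr m n) {F : ℂ → ℂ} (hF : RSym F)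
    (hc : ContinuousOn (fun t : ℝ => F (t : ℂ)) (Set.Icc (S.a 0) (S.b 0)))
    (h : FullOrth S n F) {j : ℕ} (hj : j ≤ m)
    (hfin : {x ∈ Set.Icc (S.a j) (S.b j) | linFormNeg S.μ S.e F j (x : ℂ) = 0}.Finite)
    (S' : Finset ℂ) (ord : ℂ → ℕ) (hS : ↑S' ⊆ (cpx (Set.Icc (S.a j) (S.b j)))ᶜ)
    (hz : ∀ x ∈ S', ∀ i < ord x, iteratedDeriv i (linFormNeg S.μ S.e F (j + 1)) x = 0) :
    ∃ T : Finset ℝ, ↑T ⊆ Set.Ioo (S.a j) (S.b j) ∧ n j + ∑ x ∈ S', ord x ≤ T.card ∧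
      ∀ x ∈ T, SignChangeAt (fun t : ℝ => (linFormNeg S.μ S.e F j (t : ℂ)).re) x := by
  have := S.fin j
  exact step (S.hull j hj) (S.inf j hj) (S.e_ne j) (rsym_linFormNeg S.μ S.e hF j)
    (rsym_linFormNeg S.μ S.e hF (j + 1)) (neg_cont S hc j hj) hfin (q := 0) (d := 0)
    (by simp) (by intro z _; simp [linFormNeg]) (neg_orth S hn hc h hj) (Or.inl rfl) S' ord hS hz
    (Nat.zero_le _)

lemma upper {m : ℕ} (S : NikSys m) {n : ℕ → ℕ} (hn : Decr m n) {F : ℂ → ℂ} (hF : RSym F)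
    (hc : ContinuousOn (fun t : ℝ => F (t : ℂ)) (Set.Icc (S.a 0) (S.b 0)))
    (h : FullOrth S n F) {E : Set ℂ} (hE : ∀ x ∈ Set.Icc (S.a 0) (S.b 0), (x : ℂ) ∈ E) {K : ℕ}
    (hK : CZerosLE F E (tailSum m n 0 + K)) :
    ∀ j, j + 1 ≤ m → CZerosLE (linFormNeg S.μ S.e F (j + 1))
      (cpx (Set.Icc (S.a j) (S.b j)))ᶜ (tailSum m n (j + 1) + K) := by
  have key : ∀ j, j ≤ m → ∀ E' : Set ℂ, (∀ x ∈ Set.Icc (S.a j) (S.b j), (x : ℂ) ∈ E') →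
      CZerosLE (linFormNeg S.μ S.e F j) E' (tailSum m n j + K) →
      CZerosLE (linFormNeg S.μ S.e F (j + 1))
      (cpx (Set.Icc (S.a j) (S.b j)))ᶜ (tailSum m n (j + 1) + K) := by
    intro j hj E' hE' hLE S' ord hS hz
    obtain ⟨T, hT1, hT2, hT3⟩ := neg_step S hn hF hc h hj (zeros_fin hLE hE') S' ord hS hz
    have h1 := card_le_of_zeros (rsym_linFormNeg S.μ S.e hF j) hLE hE' (neg_cont S hc j hj) hT1 hT3
    have h2 := tailSum_succ n hj
    omega
  intro j
  induction j with
  | zero => intro hj; exact key 0 (by omega) E hE hK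
  | succ j ih =>
    intro hj
    refine key (j + 1) (by omega) _ ?_ (ih (by omega))
    intro x hx
    exact ofReal_notMem (by rw [Set.inter_comm]; exact S.disj j (by omega)) hx

lemma neg_fin {m : ℕ} (S : NikSys m) {n : ℕ → ℕ} (hn : Decr m n) {F : ℂ → ℂ} (hF : RSym F)
    (hc : ContinuousOn (fun t : ℝ => F (t : ℂ)) (Set.Icc (S.a 0) (S.b 0)))
    (h : FullOrth S n F) {E : Set ℂ} (hE : ∀ x ∈ Set.Icc (S.a 0) (S.b 0), (x : ℂ) ∈ E) {K : ℕ}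
    (hK : CZerosLE F E (tailSum m n 0 + K)) {j : ℕ} (hj : j ≤ m) :
    {x ∈ Set.Icc (S.a j) (S.b j) | linFormNeg S.μ S.e F j (x : ℂ) = 0}.Finite := by
  cases j with
  | zero => exact zeros_fin hK hE
  | succ j =>
    refine zeros_fin (upper S hn hF hc h hE hK j hj) ?_
    intro x hx
    exact ofReal_notMem (by rw [Set.inter_comm]; exact S.disj j (by omega)) hx

lemma lower {m : ℕ} (S : NikSys m) {n : ℕ → ℕ} (hn : Decr m n) {F : ℂ → ℂ} (hF : RSym F)
    (hc : ContinuousOn (fun t : ℝ => F (t : ℂ)) (Set.Icc (S.a 0) (S.b 0)))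
    (h : FullOrth S n F)
    (hfin : ∀ j ≤ m, {x ∈ Set.Icc (S.a j) (S.b j) | linFormNeg S.μ S.e F j (x : ℂ) = 0}.Finite) :
    ∀ g j, j + g = m → ∃ T : Finset ℝ, ↑T ⊆ Set.Ioo (S.a j) (S.b j) ∧ tailSum m n j ≤ T.card ∧
      ∀ x ∈ T, SignChangeAt (fun t : ℝ => (linFormNeg S.μ S.e F j (t : ℂ)).re) x := by
  classical
  intro g
  induction g with
  | zero =>
    intro j hj
    have hj' : j ≤ m := by omega
    obtain ⟨T, h1, h2, h3⟩ := neg_step S hn hF hc h hj' (hfin j hj') ∅ (fun _ => 0)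
      (by simp) (by simp)
    refine ⟨T, h1, ?_, h3⟩
    have h4 : tailSum m n (j + 1) = 0 := by
      rw [tailSum, Finset.Icc_eq_empty (by omega), Finset.sum_empty]
    rw [tailSum_succ n hj', h4]
    simpa using h2
  | succ g ih =>
    intro j hj
    have hj' : j ≤ m := by omega
    obtain ⟨T', h1', h2', h3'⟩ := ih (j + 1) (by omega)
    obtain ⟨T, h1, h2, h3⟩ := neg_step S hn hF hc h hj' (hfin j hj')
      (T'.image (fun x : ℝ => (x : ℂ))) (fun _ => 1)
      (by
        intro z hz
        rw [Finset.coe_image] at hz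
        obtain ⟨x, hx, rfl⟩ := hz
        exact ofReal_notMem (by rw [Set.inter_comm]; exact S.disj j (by omega))
          (Set.Ioo_subset_Icc_self (h1' hx)))
      (by
        intro z hz i hi
        obtain ⟨x, hx, rfl⟩ := Finset.mem_image.mp hz
        obtain rfl : i = 0 := by omega
        rw [iteratedDeriv_zero]
        exact signChange_zero (rsym_linFormNeg S.μ S.e hF (j + 1)) (neg_cont S hc (j + 1) (by omega))
          (h1' hx) (h3' x hx))
    refine ⟨T, h1, ?_, h3⟩
    rw [Finset.sum_const, Finset.card_image_of_injective _ Complex.ofReal_injective] at h2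
    rw [tailSum_succ n hj']
    simp at h2
    omega

lemma second_deriv_zero {g : ℂ → ℂ} (hg : RSym g) {x : ℝ} (han : AnalyticAt ℂ g (x : ℂ))
    (h0 : g (x : ℂ) = 0) (h1 : deriv g (x : ℂ) = 0)
    (hs : SignChangeAt (fun t : ℝ => (g (t : ℂ)).re) x) : deriv (deriv g) (x : ℂ) = 0 := by
  set f : ℝ → ℝ := fun t : ℝ => (g (t : ℂ)).re with hf
  have hd : ∀ᶠ t in nhds x, deriv f t = (deriv g (t : ℂ)).re := by
    have h2 := han.eventually_analyticAt
    have h3 : Filter.Tendsto (fun t : ℝ => (t : ℂ)) (nhds x) (nhds (x : ℂ)) :=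
      Complex.continuous_ofReal.continuousAt
    filter_upwards [h3.eventually h2] with t ht
    exact ht.differentiableAt.hasDerivAt.real_of_complex.deriv
  have hdd : deriv (deriv f) x = (deriv (deriv g) (x : ℂ)).re := by
    rw [Filter.EventuallyEq.deriv_eq hd]
    exact han.deriv.differentiableAt.hasDerivAt.real_of_complex.deriv
  have hdx : deriv f x = 0 := by
    rw [hd.self_of_nhds, h1]
    simp
  have hcf : ContinuousAt f x :=
    han.differentiableAt.hasDerivAt.real_of_complex.continuousAt
  have hfx : f x = 0 := by
    simp [hf, h0]
  rw [hg.deriv.deriv.ofReal x, ← hdd]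
  have key : deriv (deriv f) x = 0 := by
    rcases lt_trichotomy (deriv (deriv f) x) 0 with hlt | heq | hgt
    · exfalso
      have hm := isLocalMax_of_deriv_deriv_neg hlt hdx hcf
      obtain ⟨δ, hδ, hball⟩ := Metric.eventually_nhds_iff.mp hm
      obtain ⟨u, v, hu, hv, huv⟩ := hs δ hδ
      have a1 : f u ≤ f x := hball (by rwa [Real.dist_eq])
      have a2 : f v ≤ f x := hball (by rwa [Real.dist_eq])
      rw [hfx] at a1 a2
      have a3 := mul_nonneg_of_nonpos_of_nonpos a1 a2
      exact absurd huv (not_lt.mpr a3)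
    · exact heq
    · exfalso
      have hm := isLocalMin_of_deriv_deriv_pos hgt hdx hcf
      obtain ⟨δ, hδ, hball⟩ := Metric.eventually_nhds_iff.mp hm
      obtain ⟨u, v, hu, hv, huv⟩ := hs δ hδ
      have a1 : f x ≤ f u := hball (by rwa [Real.dist_eq])
      have a2 : f x ≤ f v := hball (by rwa [Real.dist_eq])
      rw [hfx] at a1 a2
      have a3 := mul_nonneg a1 a2
      exact absurd huv (not_lt.mpr a3)
  rw [key]
  simp

lemma real_simple {g : ℂ → ℂ} (hg : RSym g) {D : Set ℂ}
    (hDc : ∀ z ∈ D, (starRingEnd ℂ) z ∈ D) (han : ∀ z ∈ D, AnalyticAt ℂ g z) {N : ℕ}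
    (hLE : CZerosLE g D (N + 1)) {T : Finset ℝ} (hTD : ∀ x ∈ T, (x : ℂ) ∈ D) (hT : N ≤ T.card)
    (hs : ∀ x ∈ T, SignChangeAt (fun t : ℝ => (g (t : ℂ)).re) x) {z : ℂ} (hz : z ∈ D)
    (hgz : g z = 0) : z.im = 0 ∧ deriv g z ≠ 0 := by
  classical
  have hT0 : ∀ x ∈ T, g (x : ℂ) = 0 := by
    intro x hx
    have h1 := zero_of_signChange (f := fun t : ℝ => (g (t : ℂ)).re)
      (han _ (hTD x hx)).differentiableAt.hasDerivAt.real_of_complex.continuousAt (hs x hx)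
    rw [hg.ofReal x]
    simpa using h1
  have him : z.im = 0 := by
    by_contra him
    have hne : z ≠ (starRingEnd ℂ) z := by
      intro h
      exact him (Complex.conj_eq_iff_im.mp h.symm)
    have hnz : ∀ w : ℂ, w.im ≠ 0 → w ∉ T.image (fun x : ℝ => (x : ℂ)) := by
      intro w hw hmem
      obtain ⟨x, _, rfl⟩ := Finset.mem_image.mp hmem
      simp at hw
    have h1 := hLE (insert z (insert ((starRingEnd ℂ) z) (T.image (fun x : ℝ => (x : ℂ)))))
      (fun _ => 1) (by
        intro w hw
        simp only [Finset.coe_insert, Finset.coe_image, Set.mem_insert_iff, Set.mem_image] at hw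
        rcases hw with rfl | rfl | ⟨x, hx, rfl⟩
        · exact hz
        · exact hDc _ hz
        · exact hTD x hx) (by
        intro w hw i hi
        obtain rfl : i = 0 := by omega
        rw [iteratedDeriv_zero]
        simp only [Finset.mem_insert, Finset.mem_image] at hw
        rcases hw with rfl | rfl | ⟨x, hx, rfl⟩
        · exact hgz
        · rw [hg, hgz, map_zero]
        · exact hT0 x hx)
    rw [Finset.sum_const, Finset.card_insert_of_notMem, Finset.card_insert_of_notMem,
      Finset.card_image_of_injective _ Complex.ofReal_injective] at h1
    · simp at h1
      omega
    · exact hnz _ (by simpa using him)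
    · rw [Finset.mem_insert, not_or]
      exact ⟨hne, hnz _ him⟩
  refine ⟨him, ?_⟩
  intro hder
  obtain ⟨x, rfl⟩ : ∃ x : ℝ, z = (x : ℂ) := ⟨z.re, Complex.ext (by simp) (by simp [him])⟩
  have hnot : (x : ℂ) ∉ (T.erase x).image (fun y : ℝ => (y : ℂ)) := by
    intro hmem
    obtain ⟨y, hy, hyx⟩ := Finset.mem_image.mp hmem
    exact (Finset.mem_erase.mp hy).1 (Complex.ofReal_injective hyx)
  have key : ∀ r : ℕ, (∀ i < r, iteratedDeriv i g (x : ℂ) = 0) →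
      r + (T.erase x).card ≤ N + 1 := by
    intro r hr
    have h1 := hLE (insert (x : ℂ) ((T.erase x).image (fun y : ℝ => (y : ℂ))))
      (fun w => if w = (x : ℂ) then r else 1) (by
        intro w hw
        simp only [Finset.coe_insert, Finset.coe_image, Set.mem_insert_iff, Set.mem_image] at hw
        rcases hw with rfl | ⟨y, hy, rfl⟩
        · exact hz
        · exact hTD y (Finset.mem_of_mem_erase hy)) (by
        intro w hw i hi
        rcases Finset.mem_insert.mp hw with rfl | hw
        · simp only [if_true] at hi
          exact hr i hi
        · have hwx : w ≠ (x : ℂ) := fun h => hnot (h ▸ hw)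
          simp only [hwx, if_false] at hi
          obtain rfl : i = 0 := by omega
          obtain ⟨y, hy, rfl⟩ := Finset.mem_image.mp hw
          rw [iteratedDeriv_zero]
          exact hT0 y (Finset.mem_of_mem_erase hy))
    rw [Finset.sum_insert hnot] at h1
    have h2 : ∑ w ∈ (T.erase x).image (fun y : ℝ => (y : ℂ)), (if w = (x : ℂ) then r else 1) =
        (T.erase x).card := by
      rw [← Finset.card_image_of_injective (T.erase x) Complex.ofReal_injective,
        Finset.card_eq_sum_ones]
      apply Finset.sum_congr rfl
      intro w hw
      have hwx : w ≠ (x : ℂ) := fun h => hnot (h ▸ hw)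
      rw [if_neg hwx]
    rw [h2, if_pos rfl] at h1
    exact h1
  by_cases hx : x ∈ T
  · have h3 := key 3 (by
      intro i hi
      interval_cases i
      · rw [iteratedDeriv_zero]; exact hgz
      · rw [iteratedDeriv_one]; exact hder
      · rw [iteratedDeriv_succ, iteratedDeriv_one]
        exact second_deriv_zero hg (han _ hz) hgz hder (hs x hx))
    have h4 := Finset.card_erase_add_one hx
    omega
  · have h3 := key 2 (by
      intro i hi
      interval_cases i
      · rw [iteratedDeriv_zero]; exact hgz
      · rw [iteratedDeriv_one]; exact hder)
    rw [Finset.erase_eq_of_notMem hx] at h3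
    omega

lemma msum_eq (m : ℕ) (n : ℕ → ℕ) : msum m n = tailSum m n 0 := by
  unfold msum tailSum
  congr 1
  ext x
  simp

lemma tailSum_bump (m : ℕ) (n : ℕ → ℕ) {l : ℕ} (hl : l ≤ m) :
    tailSum m (bump l n) 0 = tailSum m n 0 + 1 := by
  unfold tailSum bump
  have h1 : ∀ j, (if j = l then n j + 1 else n j) = n j + if j = l then 1 else 0 := by
    intro j
    split_ifs <;> rfl
  simp only [h1]
  rw [Finset.sum_add_distrib, Finset.sum_ite_eq', if_pos (Finset.mem_Icc.mpr ⟨Nat.zero_le _, hl⟩)]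

lemma le_bump (l : ℕ) (n : ℕ → ℕ) (j : ℕ) : n j ≤ bump l n j := by
  unfold bump
  split_ifs <;> omega

lemma base_Icc {m₁ m₂ : ℕ} (S1 : NikSys m₁) (S2 : NikSys m₂) (hbase : S1.μ 0 = S2.μ 0) :
    Set.Icc (S1.a 0) (S1.b 0) = Set.Icc (S2.a 0) (S2.b 0) := by
  rw [← S1.hull 0 (Nat.zero_le _), ← S2.hull 0 (Nat.zero_le _), hbase]

lemma fullOrth_of_MOP {m₁ m₂ : ℕ} {S1 : NikSys m₁} {S2 : NikSys m₂} {n1 n2 : ℕ → ℕ}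
    {A : ℕ → Polynomial ℝ} (h : IsMOP m₁ m₂ S1 S2 n1 n2 A) :
    FullOrth S2 n2 (linForm S1.μ S1.e m₁ 0 A) := by
  intro k hk ν hν
  have h1 := h.2.2 k hk ν hν
  unfold sInt at h1
  have he : (S2.e 0 : ℂ) ≠ 0 := by exact_mod_cast S2.e_ne 0
  exact (mul_eq_zero.mp h1).resolve_left he

lemma fullOrth_comb {m : ℕ} {S : NikSys m} {n : ℕ → ℕ} {F F' : ℂ → ℂ}
    (hc : ContinuousOn (fun t : ℝ => F (t : ℂ)) (Set.Icc (S.a 0) (S.b 0)))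
    (hc' : ContinuousOn (fun t : ℝ => F' (t : ℂ)) (Set.Icc (S.a 0) (S.b 0)))
    (h : FullOrth S n F) (h' : FullOrth S n F') (c d : ℂ) :
    FullOrth S n (fun z => c * F z + d * F' z) := by
  intro k hk ν hν
  have := S.fin 0
  have hK := S.null (Nat.zero_le m)
  have hw := wt_cont' S (Nat.zero_le k) hk
  have e1 : ∀ x : ℝ, (x : ℂ) ^ ν * (c * F (x : ℂ) + d * F' (x : ℂ)) * wt S.μ S.e 0 k (x : ℂ) =
      c * ((x : ℂ) ^ ν * F (x : ℂ) * wt S.μ S.e 0 k (x : ℂ)) +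
      d * ((x : ℂ) ^ ν * F' (x : ℂ) * wt S.μ S.e 0 k (x : ℂ)) := by
    intro x
    ring
  simp only [e1]
  rw [integral_add, integral_const_mul, integral_const_mul, h k hk ν hν, h' k hk ν hν]
  · simp
  · apply Integrable.const_mul
    exact integ_of_cont hK (ContinuousOn.mul (ContinuousOn.mul (by fun_prop) hc) hw)
  · apply Integrable.const_mul
    exact integ_of_cont hK (ContinuousOn.mul (ContinuousOn.mul (by fun_prop) hc') hw)

/-- A form of too small degree cannot satisfy the orthogonality relations for the bigger index. -/
lemma no_low {m₁ m₂ : ℕ} (S1 : NikSys m₁) (S2 : NikSys m₂) (hbase : S1.μ 0 = S2.μ 0)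
    {n1 n2 : ℕ → ℕ} (h1 : Decr m₁ n1) (h2 : Decr m₂ n2) (hsum : tailSum m₁ n1 0 ≤ tailSum m₂ n2 0)
    {A : ℕ → Polynomial ℝ} (hdeg : ∀ k ≤ m₁, (A k).degree < (n1 k : WithBot ℕ))
    (hne : ∃ k ≤ m₁, A k ≠ 0) (ho : FullOrth S2 n2 (linForm S1.μ S1.e m₁ 0 A)) : False := by
  obtain ⟨k, hk, hk0⟩ := hne
  obtain ⟨M, hM, hLE⟩ := czerosLE_of_LT
    (linForm_zeros S1 h1 A hdeg m₁ 0 (by omega) ⟨k, Nat.zero_le _, hk, hk0⟩)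
  have hI := base_Icc S1 S2 hbase
  have hc := linForm_cont S1 0 A
  have hE := mem_Dom S1 0
  rw [hI] at hc hE
  have hsym := rsym_linForm S1.μ S1.e m₁ 0 A
  have hLE' : CZerosLE (linForm S1.μ S1.e m₁ 0 A) (Dom m₁ S1 0) (tailSum m₂ n2 0 + 0) := by
    intro S' ord hS hz
    have := hLE S' ord hS hz
    omega
  obtain ⟨T, t1, t2, t3⟩ := lower S2 h2 hsym hc ho
    (fun j hj => neg_fin S2 h2 hsym hc ho hE hLE' hj) m₂ 0 (by omega)
  have := card_le_of_zeros hsym hLE hE hc t1 t3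
  omega

/-- For `j = 1,…,m₂` the form `𝒢_{n,-j} = A·𝒜_{n,-j} + B·𝒜_{n^l,-j}`
has at most `N_{2,j} + 1` zeros in `ℂ ∖ Δ²_{j-1}`, counting multiplicities, and at
least `N_{2,j}` sign changes in the interior of `Δ²_j`; hence all its zeros in
`ℂ ∖ Δ²_{j-1}` are real and simple. -/
theorem combination_negative_zero_structure
    (m₁ m₂ : ℕ) (S1 : NikSys m₁) (S2 : NikSys m₂)
    (hbase : S1.μ 0 = S2.μ 0 ∧ S1.e 0 = S2.e 0)
    (n1 n2 : ℕ → ℕ) (l₁ l₂ : ℕ) (hl₁ : l₁ ≤ m₁) (hl₂ : l₂ ≤ m₂)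
    (h1 : Decr m₁ n1) (h2 : Decr m₂ n2)
    (h1l : Decr m₁ (bump l₁ n1)) (h2l : Decr m₂ (bump l₂ n2))
    (hsum : msum m₂ n2 + 1 = msum m₁ n1) (hlast : 1 ≤ n1 m₁)
    (A A' : ℕ → Polynomial ℝ)
    (hA : IsMOP m₁ m₂ S1 S2 n1 n2 A) (hAm : MonicLast m₁ A)
    (hA' : IsMOP m₁ m₂ S1 S2 (bump l₁ n1) (bump l₂ n2) A') (hA'm : MonicLast m₁ A')
    (c d : ℝ) (hcd : 0 < |c| + |d|)
    -- the forms `𝒢_{n,-j}`, obtained from `𝒢_{n,0}` by the recursion (4.1):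
    (G : ℕ → ℂ → ℂ)
    (hG : ∀ j, G j = linFormNeg S2.μ S2.e
      (fun z => (c : ℂ) * linForm S1.μ S1.e m₁ 0 A z +
        (d : ℂ) * linForm S1.μ S1.e m₁ 0 A' z) j) :
    ∀ j, 1 ≤ j → j ≤ m₂ →
      CZerosLE (G j) ((cpx (Set.Icc (S2.a (j-1)) (S2.b (j-1))))ᶜ)
        (tailSum m₂ n2 j + 1) ∧
      (∃ S : Finset ℝ, ↑S ⊆ Set.Ioo (S2.a j) (S2.b j) ∧
        tailSum m₂ n2 j ≤ S.card ∧
        ∀ x ∈ S, SignChangeAt (fun t : ℝ => (G j (t : ℂ)).re) x) ∧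
      (∀ z ∈ (cpx (Set.Icc (S2.a (j-1)) (S2.b (j-1))))ᶜ,
        G j z = 0 → z.im = 0 ∧ deriv (G j) z ≠ 0) := by
  have hμ := hbase.1
  have hI := base_Icc S1 S2 hμ
  have hcA := linForm_cont S1 0 A
  have hcA' := linForm_cont S1 0 A'
  have hE := mem_Dom S1 0
  rw [hI] at hcA hcA' hE
  have hoA := fullOrth_of_MOP hA
  have hoA' := fullOrth_of_MOP hA'
  have hoA'2 : FullOrth S2 n2 (linForm S1.μ S1.e m₁ 0 A') := fun k hk ν hν =>
    hoA' k hk ν (lt_of_lt_of_le hν (le_bump l₂ n2 k))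
  rw [msum_eq, msum_eq] at hsum
  set F : ℂ → ℂ := fun z => (c : ℂ) * linForm S1.μ S1.e m₁ 0 A z +
        (d : ℂ) * linForm S1.μ S1.e m₁ 0 A' z with hFdef
  have hoF : FullOrth S2 n2 F := fullOrth_comb hcA hcA' hoA hoA'2 c d
  have hcF : ContinuousOn (fun t : ℝ => F (t : ℂ)) (Set.Icc (S2.a 0) (S2.b 0)) :=
    (continuousOn_const.mul hcA).add (continuousOn_const.mul hcA')
  set P : ℕ → Polynomial ℝ := fun k => C c * A k + C d * A' k with hP
  have hFP : F = linForm S1.μ S1.e m₁ 0 P := by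
    funext z
    simp only [hFdef, hP, linForm, Finset.mul_sum]
    rw [← Finset.sum_add_distrib]
    apply Finset.sum_congr rfl
    intro k _
    simp only [map_add, map_mul, Polynomial.aeval_C, Complex.coe_algebraMap]
    ring
  have hsF : RSym F := by
    rw [hFP]
    exact rsym_linForm _ _ _ _ _
  have hPdeg : ∀ k ≤ m₁, (P k).degree < (bump l₁ n1 k : WithBot ℕ) := by
    intro k hk
    rw [← Polynomial.mem_degreeLT]
    simp only [hP, ← Polynomial.smul_eq_C_mul]
    apply Submodule.add_mem
    · apply Submodule.smul_mem
      rw [Polynomial.mem_degreeLT]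
      refine lt_of_lt_of_le (hA.1 k hk) ?_
      exact_mod_cast le_bump l₁ n1 k
    · apply Submodule.smul_mem
      rw [Polynomial.mem_degreeLT]
      exact hA'.1 k hk
  have hPne : ∃ k, 0 ≤ k ∧ k ≤ m₁ ∧ P k ≠ 0 := by
    by_contra hcon
    push Not at hcon
    have hP0 : ∀ k ≤ m₁, c • A k + d • A' k = 0 := by
      intro k hk
      have := hcon k (Nat.zero_le _) hk
      simpa only [hP, ← Polynomial.smul_eq_C_mul] using this
    by_cases hd : d = 0
    · have hc0 : c ≠ 0 := by
        rintro rfl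
        simp [hd] at hcd
      obtain ⟨k, hk, hk0⟩ := hA.2.1
      have := hP0 k hk
      rw [hd, zero_smul, add_zero] at this
      exact hk0 ((smul_eq_zero.mp this).resolve_left hc0)
    · refine no_low S1 S2 hμ h1 h2l ?_ (A := A') ?_ hA'.2.1 hoA'
      · rw [tailSum_bump m₂ n2 hl₂]
        omega
      · intro k hk
        have h3 : A' k = (-(d⁻¹ * c)) • A k := by
          have h4 := congrArg (fun p => d⁻¹ • p) (hP0 k hk)
          simp only [smul_add, smul_smul, inv_mul_cancel₀ hd, one_smul, smul_zero] at h4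
          rw [neg_smul]
          exact eq_neg_of_add_eq_zero_right h4
        rw [h3, ← Polynomial.mem_degreeLT]
        apply Submodule.smul_mem
        rw [Polynomial.mem_degreeLT]
        exact hA.1 k hk
  obtain ⟨M, hM, hLE⟩ := czerosLE_of_LT
    (linForm_zeros S1 h1l P hPdeg m₁ 0 (by omega) hPne)
  rw [← hFP] at hLE
  rw [tailSum_bump m₁ n1 hl₁] at hM
  have hM' : M = tailSum m₂ n2 0 + 1 := by omega
  rw [hM'] at hLE
  intro j hj1 hjm
  obtain ⟨i, rfl⟩ : ∃ i, j = i + 1 := ⟨j - 1, by omega⟩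
  rw [hG (i + 1), Nat.add_sub_cancel]
  have hup := upper S2 h2 hsF hcF hoF hE hLE i hjm
  obtain ⟨T, t1, t2, t3⟩ := lower S2 h2 hsF hcF hoF
    (fun j hj => neg_fin S2 h2 hsF hcF hoF hE hLE hj) (m₂ - (i + 1)) (i + 1) (by omega)
  refine ⟨hup, ⟨T, t1, t2, t3⟩, ?_⟩
  intro z hz hgz
  refine real_simple (D := (cpx (Set.Icc (S2.a i) (S2.b i)))ᶜ)
    (rsym_linFormNeg S2.μ S2.e hsF (i + 1)) (fun w hw => conj_notMem_cpx hw)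
    (fun w hw => neg_analytic S2 hcF (by omega) hw) hup ?_ t2 t3 hz hgz
  intro x hx
  exact ofReal_notMem (by rw [Set.inter_comm]; exact S2.disj i (by omega))
    (Set.Ioo_subset_Icc_self (t1 hx))

end
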